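/- Suppose α has an adjusted nearest integer expansion, and let γ_* be the associated point. Then M(α,γ_*) ≥ (√10 − 3)(7 − √13)/(31 − 2√10 − 3√13) (= 1/25.159…). -/

import Mathlib

open Filter Finset

attribute [local instance] Classical.propDecidable

/-- Distance from `x` to the nearest integer, `‖x‖`. -/
noncomputable def nint (x : ℝ) : ℝ := |x - round x|

/-- The two-sided inhomogeneous approximation constant
`M(α,γ) = liminf_{|n|→∞} |n|·‖nα-γ‖`. -/
noncomputable def Mval (α γ : ℝ) : ℝ :=
  Filter.liminf (fun n : ℤ => (|n| : ℝ) * nint (n * α - γ)) Filter.cofinite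

/-- Denominators `q_i` of a semi-regular continued fraction with partial quotients `a`
and signs `e`: `q_0 = 1`, `q_1 = a_1`, `q_i = a_i q_{i-1} + ε_i q_{i-2}`. -/
noncomputable def qs (a e : ℕ → ℤ) : ℕ → ℤ
  | 0 => 1
  | 1 => a 1
  | i + 2 => a (i + 2) * qs a e (i + 1) + e (i + 2) * qs a e i

/-- Reversed tails `ᾱ_i = q_{i-1}/q_i` (with `ᾱ_0 = 0`). -/
noncomputable def ab (a e : ℕ → ℤ) (i : ℕ) : ℝ :=
  if i = 0 then 0 else (qs a e (i - 1) : ℝ) / (qs a e i : ℝ)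

/-- An adjusted nearest integer expansion of `α`: a semi-regular continued fraction
`α = 1/(a_1 + ε_2/(a_2 + ε_3/(a_3 + ⋯)))` with tails `t i = α_i`, satisfying the
conditions (i)-(iv) of an adjusted expansion. -/
structure ANIE (α : ℝ) where
  /-- partial quotients `a_i` (for `i ≥ 1`) -/
  a : ℕ → ℤ
  /-- signs `ε_i` -/
  e : ℕ → ℤ
  /-- tails: `t i = α_i`, `t 0 = α` -/
  t : ℕ → ℝ
  ha : ∀ i, 1 ≤ i → 2 ≤ a i
  he : ∀ i, e i = 1 ∨ e i = -1
  he1 : e 1 = 1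
  ht0 : t 0 = α
  htpos : ∀ i, 0 < t i
  htlt1 : ∀ i, t i < 1
  hrec : ∀ i, t i = 1 / ((a (i + 1) : ℝ) + (e (i + 2) : ℝ) * t (i + 1))
  /-- condition (i): `a_i = 2` implies `ε_i = +1` or `ε_{i+1} = +1` -/
  hcond1 : ∀ i, 1 ≤ i → a i = 2 → e i = 1 ∨ e (i + 1) = 1
  /-- condition (ii): if `a_i = 2`, `ε_i = -1` then `1/ᾱ_{i-1} - 1/α_i ≥ 1` -/
  hcond2 : ∀ i, 1 ≤ i → a i = 2 → e i = -1 → 1 / ab a e (i - 1) - 1 / t i ≥ 1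
  /-- condition (iii): if `a_i = 2`, `ε_{i+1} = -1` then `1/α_i - 1/ᾱ_{i-1} > 1` -/
  hcond3 : ∀ i, 1 ≤ i → a i = 2 → e (i + 1) = -1 → 1 / t i - 1 / ab a e (i - 1) > 1
  /-- condition (iv): no block `2, (-3,)^k, -2` in the sequence `(ε_i a_i)` -/
  hcond4 : ∀ i k, 1 ≤ i →
    ¬(e i * a i = 2 ∧ (∀ j, j < k → e (i + 1 + j) * a (i + 1 + j) = -3) ∧
        e (i + 1 + k) * a (i + 1 + k) = -2)

namespace ANIE

variable {α : ℝ}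

/-- `D n = D_{n-1} = α_0 α_1 ⋯ α_{n-1}` (so `D 0 = 1`, `D 1 = α`). -/
noncomputable def D (E : ANIE α) (n : ℕ) : ℝ := ∏ j ∈ Finset.range n, E.t j

/-- The number of indices `1 ≤ k ≤ i` with `a_k` odd. -/
noncomputable def oddIdx (E : ANIE α) (i : ℕ) : ℕ :=
  ((Finset.Icc 1 i).filter fun k => Odd (E.a k)).card

/-- `λ_i`: zero if `a_i` is even, `(-1)^j` if `a_i = a_{n_j}` is the `j`-th odd partial
quotient. -/
noncomputable def lam (E : ANIE α) (i : ℕ) : ℤ :=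
  if Odd (E.a i) then (-1) ^ E.oddIdx i else 0

/-- `γ_* = Σ_{i≥1} (a_i - 1 + ε_i + λ_i)/2 · D_{i-1}`. -/
noncomputable def gammaStar (E : ANIE α) : ℝ :=
  ∑' k : ℕ,
    (((E.a (k + 1) : ℝ) - 1 + (E.e (k + 1) : ℝ) + (E.lam (k + 1) : ℝ)) / 2) * E.D (k + 1)

/-- `ᾱ_i = q_{i-1}/q_i`. -/
noncomputable def abar (E : ANIE α) (i : ℕ) : ℝ := ab E.a E.e i

/-- `δ_i = -(-ε_1)(-ε_2)⋯(-ε_{i+1})`. -/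
noncomputable def delta (E : ANIE α) (i : ℕ) : ℤ := -∏ j ∈ Finset.Icc 1 (i + 1), (-E.e j)

/-- `d_n^- = (Σ_{i=1}^n t_i δ_{i-1} q_{i-1}) / (δ_{n-1} q_n)` for `γ_*` (`t_i = λ_i`). -/
noncomputable def dminus (E : ANIE α) (n : ℕ) : ℝ :=
  (∑ i ∈ Finset.Icc 1 n, (E.lam i : ℝ) * (E.delta (i - 1) : ℝ) * (qs E.a E.e (i - 1) : ℝ)) /
    ((E.delta (n - 1) : ℝ) * (qs E.a E.e n : ℝ))

/-- `d_n^+ = (Σ_{i=n+1}^∞ t_i D_{i-1}) / D_{n-1}` for `γ_*` (`t_i = λ_i`). -/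
noncomputable def dplus (E : ANIE α) (n : ℕ) : ℝ :=
  (∑' k : ℕ, (E.lam (n + 1 + k) : ℝ) * E.D (n + 1 + k)) / E.D n

/-- `i ∈ S(γ_*)`: `|d_i^-| ≤ 1 - ᾱ_i` and `-(1-ε_{i+1}α_i) ≤ d_i^+ ≤ 1+ε_{i+1}α_i`. -/
def inS (E : ANIE α) (i : ℕ) : Prop :=
  |E.dminus i| ≤ 1 - E.abar i ∧
    -(1 - (E.e (i + 1) : ℝ) * E.t i) ≤ E.dplus i ∧
      E.dplus i ≤ 1 + (E.e (i + 1) : ℝ) * E.t i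

end ANIE

/-- The numerical system attached to an expansion: `t` future tails, `u` reversed tails,
`f`, `g` the normalised past and future sums. -/
structure Sys (a : ℕ → ℤ) (e t u f g : ℕ → ℝ) : Prop where
  ha : ∀ i, 2 ≤ a (i + 1)
  he : ∀ i, e i = 1 ∨ e i = -1
  he1 : e 1 = 1
  t0 : ∀ i, 0 < t i
  t1 : ∀ i, t i < 1
  ht : ∀ i, t i * ((a (i + 1) : ℝ) + e (i + 2) * t (i + 1)) = 1
  u00 : u 0 = 0
  u0 : ∀ i, 0 ≤ u i
  u1 : ∀ i, u i < 1
  hu : ∀ i, u (i + 1) * ((a (i + 1) : ℝ) + e (i + 1) * u i) = 1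
  f00 : f 0 = 0
  fodd : ∀ i, Odd (a (i + 1)) → f (i + 1) = u (i + 1) * (1 + e (i + 1) * f i)
  feven : ∀ i, ¬ Odd (a (i + 1)) → f (i + 1) = - (e (i + 1) * u (i + 1) * f i)
  g0 : ∀ i, 0 ≤ g i
  gt : ∀ i, g i ≤ t i
  godd : ∀ i, Odd (a (i + 1)) → g i = t i * (1 - g (i + 1))
  geven : ∀ i, ¬ Odd (a (i + 1)) → g i = t i * g (i + 1)
  hc1 : ∀ i, a (i + 1) = 2 → e (i + 1) = 1 ∨ e (i + 2) = 1
  hc2 : ∀ i, a (i + 1) = 2 → e (i + 1) = -1 → u i * (1 + t (i + 1)) ≤ t (i + 1)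
  hc3 : ∀ i, a (i + 1) = 2 → e (i + 2) = -1 → t (i + 1) * (1 + u i) < u i
  hc4 : ∀ i, a (i + 1) = 2 → e (i + 1) = 1 → a (i + 2) = 2 → e (i + 2) = -1 → False
  hc5 : ∀ i, a (i + 1) = 2 → e (i + 1) = 1 → a (i + 2) = 3 → e (i + 2) = -1 →
    a (i + 3) = 2 → e (i + 3) = -1 → False

namespace Sys

variable {a : ℕ → ℤ} {e t u f g : ℕ → ℝ}

theorem haR (S : Sys a e t u f g) (i : ℕ) : (2 : ℝ) ≤ a (i + 1) := by exact_mod_cast S.ha i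

theorem not_odd2 {x : ℤ} (h : x = 2) : ¬ Odd x := by subst h; decide
theorem odd3 {x : ℤ} (h : x = 3) : Odd x := by subst h; decide
theorem not_odd4 {x : ℤ} (h : x = 4) : ¬ Odd x := by subst h; decide

theorem pos_of_mul_one {x y : ℝ} (h : x * y = 1) (hy : 0 < y) : 0 < x := by
  by_contra hx; nlinarith

theorem upos (S : Sys a e t u f g) (i : ℕ) : 0 < u (i + 1) := by
  rcases (S.u0 (i+1)).lt_or_eq with h | h
  · exact h
  · have := S.hu i; rw [← h] at this; simp at this

/-- if `x * d = 1`, `0 < x`, `c ≤ d`, then `x * c ≤ 1` -/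
theorem mul_le_one_of {x d c : ℝ} (h : x * d = 1) (hx : 0 ≤ x) (hc : c ≤ d) : x * c ≤ 1 := by
  nlinarith [mul_le_mul_of_nonneg_left hc hx]

theorem t23 (S : Sys a e t u f g) (i : ℕ) : t i < 2 / 3 := by
  have h := S.ht i
  have h0 := S.t0 i
  have h1 := S.t0 (i+1)
  have h1' := S.t1 (i+1)
  have hu0 := S.u0 i
  have hu1 := S.u1 i
  rcases (S.ha i).eq_or_lt with h2 | h2
  · rcases S.he (i+2) with he | he
    · have : (a (i+1) : ℝ) = 2 := by exact_mod_cast h2.symm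
      rw [this, he] at h
      nlinarith [mul_pos h0 h1]
    · have h3 := S.hc3 i h2.symm he
      have : (a (i+1) : ℝ) = 2 := by exact_mod_cast h2.symm
      rw [this, he] at h
      have : t (i+1) < 1/2 := by nlinarith
      nlinarith
  · have h3 : (3:ℝ) ≤ a (i+1) := by exact_mod_cast h2
    rcases S.he (i+2) with he | he <;> rw [he] at h <;> nlinarith [mul_pos h0 h1]

theorem t12 (S : Sys a e t u f g) (i : ℕ) (hi : e (i+1) = -1) : t i < 1 / 2 := by
  have h := S.ht i
  have h0 := S.t0 i
  have h1 := S.t0 (i+1)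
  have h1' := S.t1 (i+1)
  rcases (S.ha i).eq_or_lt with h2 | h2
  · rcases S.hc1 i h2.symm with he | he
    · rw [hi] at he; norm_num at he
    · have : (a (i+1) : ℝ) = 2 := by exact_mod_cast h2.symm
      rw [this, he] at h
      nlinarith [mul_pos h0 h1]
  · have h3 : (3:ℝ) ≤ a (i+1) := by exact_mod_cast h2
    rcases S.he (i+2) with he | he <;> rw [he] at h <;> nlinarith [mul_pos h0 h1]

theorem t25 (S : Sys a e t u f g) (i : ℕ) (hi : 3 ≤ a (i+1)) : t i < 2 / 5 := by
  have h := S.ht i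
  have h0 := S.t0 i
  have h1 := S.t0 (i+1)
  have h3 : (3:ℝ) ≤ a (i+1) := by exact_mod_cast hi
  rcases S.he (i+2) with he | he
  · rw [he] at h; nlinarith [mul_pos h0 h1]
  · have := S.t12 (i+1) he
    rw [he] at h; nlinarith [mul_pos h0 h1]

theorem t27 (S : Sys a e t u f g) (i : ℕ) (hi : 4 ≤ a (i+1)) : t i < 2 / 7 := by
  have h := S.ht i
  have h0 := S.t0 i
  have h1 := S.t0 (i+1)
  have h3 : (4:ℝ) ≤ a (i+1) := by exact_mod_cast hi
  rcases S.he (i+2) with he | he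
  · rw [he] at h; nlinarith [mul_pos h0 h1]
  · have := S.t12 (i+1) he
    rw [he] at h; nlinarith [mul_pos h0 h1]

theorem u12 (S : Sys a e t u f g) (i : ℕ) (hi : e (i+1) = -1) : u i ≤ 1 / 2 := by
  cases i with
  | zero => rw [S.u00]; norm_num
  | succ i =>
    have h := S.hu i
    have h0 := S.u0 i
    have h1 := S.u1 i
    have h1' := S.upos i
    rcases (S.ha i).eq_or_lt with h2 | h2
    · rcases S.hc1 i h2.symm with he | he
      · have : (a (i+1) : ℝ) = 2 := by exact_mod_cast h2.symm
        rw [this, he] at h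
        nlinarith [mul_nonneg h0 h1'.le]
      · rw [hi] at he; norm_num at he
    · have h3 : (3:ℝ) ≤ a (i+1) := by exact_mod_cast h2
      rcases S.he (i+1) with he | he <;> rw [he] at h <;> nlinarith [mul_nonneg h0 h1'.le]

theorem u58 (S : Sys a e t u f g) (i : ℕ) : u i ≤ 5 / 8 := by
  cases i with
  | zero => rw [S.u00]; norm_num
  | succ i =>
    have h := S.hu i
    have h0 := S.u0 i
    have h1 := S.u1 i
    have h1' := S.upos i
    rcases (S.ha i).eq_or_lt with h2 | h2
    · have : (a (i+1) : ℝ) = 2 := by exact_mod_cast h2.symm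
      rw [this] at h
      rcases S.he (i+1) with he | he
      · rw [he] at h
        nlinarith [mul_nonneg h0 h1'.le]
      · have h5 := S.hc2 i h2.symm he
        have h6 := S.t23 (i+1)
        have h7 := S.t0 (i+1)
        have : u i ≤ 2/5 := by nlinarith
        rw [he] at h
        nlinarith
    · have h3 : (3:ℝ) ≤ a (i+1) := by exact_mod_cast h2
      rcases S.he (i+1) with he | he <;> rw [he] at h <;> nlinarith [mul_nonneg h0 h1'.le]

theorem u25 (S : Sys a e t u f g) (i : ℕ) (hi : 3 ≤ a (i+1)) : u (i+1) ≤ 2 / 5 := by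
  have h := S.hu i
  have h0 := S.u0 i
  have h1' := S.upos i
  have h3 : (3:ℝ) ≤ a (i+1) := by exact_mod_cast hi
  rcases S.he (i+1) with he | he
  · rw [he] at h; nlinarith [mul_nonneg h0 h1'.le]
  · have := S.u12 i he
    rw [he] at h; nlinarith [mul_nonneg h0 h1'.le]

theorem u27 (S : Sys a e t u f g) (i : ℕ) (hi : 4 ≤ a (i+1)) : u (i+1) ≤ 2 / 7 := by
  have h := S.hu i
  have h0 := S.u0 i
  have h1' := S.upos i
  have h3 : (4:ℝ) ≤ a (i+1) := by exact_mod_cast hi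
  rcases S.he (i+1) with he | he
  · rw [he] at h; nlinarith [mul_nonneg h0 h1'.le]
  · have := S.u12 i he
    rw [he] at h; nlinarith [mul_nonneg h0 h1'.le]

/-- the invariant region for the past -/
theorem finv (S : Sys a e t u f g) (i : ℕ) :
    u i - 1 ≤ 3 * f i ∧ 3 * f i ≤ 1 + u i ∧ f i ≤ 1 - u i ∧ - f i ≤ 1 - u i := by
  induction i with
  | zero => rw [S.u00, S.f00]; norm_num
  | succ i ih =>
    obtain ⟨i1, i2, i3, i4⟩ := ih
    have h := S.hu i
    have h0 := S.u0 i
    have h1 := S.u1 i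
    have p := S.upos i
    have key : ∀ c : ℝ, 0 ≤ c → 0 ≤ u (i+1) * c := fun c hc => mul_nonneg p.le hc
    by_cases ho : Odd (a (i+1))
    · rw [S.fodd i ho]
      have h3 : (3:ℝ) ≤ a (i+1) := by
        have := S.ha i
        have h' : a (i+1) ≠ 2 := fun h' => not_odd2 h' ho
        exact_mod_cast (by omega : 3 ≤ a (i+1))
      rcases S.he (i+1) with he | he <;> rw [he] at h ⊢
      · refine ⟨?_, ?_, ?_, ?_⟩
        · nlinarith [key (a (i+1) + u i - 1 + 3 + 3 * f i) (by nlinarith)]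
        · nlinarith [key (a (i+1) + u i + 1 - 3 - 3 * f i) (by nlinarith)]
        · nlinarith [key (a (i+1) + u i - 1 - 1 - f i) (by nlinarith)]
        · nlinarith [key (a (i+1) + u i - 1 + 1 + f i) (by nlinarith)]
      · refine ⟨?_, ?_, ?_, ?_⟩
        · nlinarith [key (a (i+1) - u i - 1 + 3 - 3 * f i) (by nlinarith)]
        · nlinarith [key (a (i+1) - u i + 1 - 3 + 3 * f i) (by nlinarith)]
        · nlinarith [key (a (i+1) - u i - 1 - 1 + f i) (by nlinarith)]
        · nlinarith [key (a (i+1) - u i - 1 + 1 - f i) (by nlinarith)]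
    · rw [S.feven i ho]
      have h3 := S.haR i
      rcases S.he (i+1) with he | he <;> rw [he] at h ⊢
      · refine ⟨?_, ?_, ?_, ?_⟩
        · nlinarith [key (a (i+1) + u i - 1 - 3 * f i) (by nlinarith)]
        · nlinarith [key (a (i+1) + u i + 1 + 3 * f i) (by nlinarith)]
        · nlinarith [key (a (i+1) + u i - 1 + f i) (by nlinarith)]
        · nlinarith [key (a (i+1) + u i - 1 - f i) (by nlinarith)]
      · refine ⟨?_, ?_, ?_, ?_⟩
        · nlinarith [key (a (i+1) - u i - 1 + 3 * f i) (by nlinarith)]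
        · nlinarith [key (a (i+1) - u i + 1 - 3 * f i) (by nlinarith)]
        · nlinarith [key (a (i+1) - u i - 1 - f i) (by nlinarith)]
        · nlinarith [key (a (i+1) - u i - 1 + f i) (by nlinarith)]

theorem tg1 (S : Sys a e t u f g) (i : ℕ) : t i + g i ≤ 1 := by
  have h := S.ht i
  have h0 := S.t0 i
  have h1 := S.t0 (i+1)
  have h23 := S.t23 i
  have hg := S.gt i
  have hg1 := S.gt (i+1)
  rcases (S.ha i).eq_or_lt with h2 | h2
  · have h2R : (a (i+1) : ℝ) = 2 := by exact_mod_cast h2.symm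
    rw [h2R] at h
    rcases S.he (i+2) with he | he
    · rw [he] at h; nlinarith [mul_pos h0 h1]
    · have := S.t12 (i+1) he
      have hge := S.geven i (not_odd2 h2.symm)
      rw [he] at h
      nlinarith
  · have := S.t25 i h2
    linarith

theorem fabs (S : Sys a e t u f g) (i : ℕ) : f i ≤ 8/5 * u i := by
  cases i with
  | zero => rw [S.u00, S.f00]; norm_num
  | succ i =>
    obtain ⟨i1, i2, i3, i4⟩ := S.finv i
    have p := S.upos i
    have := S.u58 i
    have := S.u0 i
    by_cases ho : Odd (a (i+1))
    · rw [S.fodd i ho]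
      rcases S.he (i+1) with he | he <;> rw [he] <;> nlinarith
    · rw [S.feven i ho]
      rcases S.he (i+1) with he | he <;> rw [he] <;> nlinarith

/-- odd last quotient: `f ≥ 0` -/
theorem fodd_nonneg (S : Sys a e t u f g) (i : ℕ) (ho : Odd (a (i+1))) :
    2/5 * u (i+1) ≤ f (i+1) := by
  obtain ⟨i1, i2, i3, i4⟩ := S.finv i
  have p := S.upos i
  have := S.u58 i
  have := S.u0 i
  rw [S.fodd i ho]
  rcases S.he (i+1) with he | he <;> rw [he] <;> nlinarith

end Sys

namespace Sys

variable {a : ℕ → ℤ} {e t u f g : ℕ → ℝ}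

theorem tr (S : Sys a e t u f g) (i : ℕ) {A : ℤ} {s : ℝ} (h : a (i+1) = A) (h' : e (i+2) = s) :
    t i * ((A:ℝ) + s * t (i+1)) = 1 := by
  have := S.ht i; rwa [h, h'] at this

theorem ur (S : Sys a e t u f g) (i : ℕ) {A : ℤ} {s : ℝ} (h : a (i+1) = A) (h' : e (i+1) = s) :
    u (i+1) * ((A:ℝ) + s * u i) = 1 := by
  have := S.hu i; rwa [h, h'] at this

theorem he_ne (S : Sys a e t u f g) (i : ℕ) (h : e i ≠ 1) : e i = -1 := (S.he i).resolve_left h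

theorem hc1l (S : Sys a e t u f g) (i : ℕ) (h : a (i+1) = 2) (h' : e (i+2) = -1) :
    e (i+1) = 1 := by
  rcases S.hc1 i h with h1 | h1
  · exact h1
  · rw [h'] at h1; norm_num at h1

theorem hc1r (S : Sys a e t u f g) (i : ℕ) (h : a (i+1) = 2) (h' : e (i+1) = -1) :
    e (i+2) = 1 := by
  rcases S.hc1 i h with h1 | h1
  · rw [h'] at h1; norm_num at h1
  · exact h1

theorem ge3 (S : Sys a e t u f g) (i : ℕ) (h : a (i+1) ≠ 2) : 3 ≤ a (i+1) := by
  have := S.ha i; omega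

/-- if `1/2 ≤ t i` the expansion continues with `2, -`. -/
theorem t_big (S : Sys a e t u f g) (i : ℕ) (h : 1/2 ≤ t i) : a (i+1) = 2 ∧ e (i+2) = -1 := by
  have h2 : a (i+1) = 2 := by
    by_contra h2
    have := S.t25 i (S.ge3 i h2); linarith
  refine ⟨h2, S.he_ne _ fun he => ?_⟩
  have := S.tr i h2 he
  have := S.t0 i
  have := S.t0 (i+1)
  push_cast at *
  nlinarith [mul_pos (S.t0 i) (S.t0 (i+1))]

set_option maxHeartbeats 1000000 in
theorem pattern (S : Sys a e t u f g) (i : ℕ) (h1 : a (i+1) = 2) (h2 : a (i+2) = 3)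
    (h2' : e (i+2) = -1) (h3 : a (i+3) = 2) (h4 : a (i+4) = 3) (h4' : e (i+4) = -1) : False := by
  have h1' := S.hc1l i h1 h2'
  have h3' := S.hc1l (i+2) h3 h4'
  have w0 := S.u0 i
  have p1 := S.ur i h1 h1'
  have p2 := S.ur (i+1) h2 h2'
  have p3 := S.ur (i+2) h3 h3'
  have c1 := S.hc3 i h1 h2'
  have c3 := S.hc3 (i+2) h3 h4'
  have q1 := S.tr (i+1) h2 h3'
  have q2 := S.tr (i+2) h3 h4'
  have q3 := S.tr (i+3) h4 (s := e (i+5)) rfl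
  have tp1 := S.t0 (i+1)
  have tp2 := S.t0 (i+2)
  have tp3 := S.t0 (i+3)
  have tp4 := S.t0 (i+4)
  push_cast at p1 p2 p3 q1 q2 q3
  simp only [add_assoc, Nat.reduceAdd] at p1 p2 p3 c1 c3 q1 q2 q3
  have e1 : u (i+1) = 1 / (2 + u i) := by rw [eq_div_iff (by linarith)]; linarith
  have e2 : u (i+2) = (2 + u i) / (5 + 3 * u i) := by
    rw [eq_div_iff (by linarith)]
    rw [e1] at p2; field_simp at p2; linarith
  have e3 : u (i+3) = (5 + 3 * u i) / (12 + 7 * u i) := by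
    rw [eq_div_iff (by linarith)]
    rw [e2] at p3; field_simp at p3; linarith
  have wp : 0 < u i := by nlinarith
  generalize u i = w at *
  -- 1/t3 > 4 - u1
  have d3 : t (i+3) * (7 + 4 * w) < 2 + w := by
    rw [e2] at c3; field_simp at c3; nlinarith
  have d3' : (7 + 4 * w) < (2 + w) * (3 + e (i+5) * t (i+4)) := by
    by_contra hh; push Not at hh
    nlinarith
  have e5 : e (i+5) = 1 := by
    rcases S.he (i+5) with h | h
    · exact h
    · rw [h] at d3'; nlinarith
  rw [e5] at d3'
  have d4 : 1 + w < (2 + w) * t (i+4) := by nlinarith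
  have b4 : 1/2 ≤ t (i+4) := by nlinarith
  obtain ⟨h5, h6'⟩ := S.t_big (i+4) b4
  have q4 := S.tr (i+4) h5 h6'
  have c5 := S.hc3 (i+4) h5 h6'
  have tp5 := S.t0 (i+5)
  have p4 := S.ur (i+3) h4 h4'
  push_cast at q4 p4
  simp only [add_assoc, Nat.reduceAdd] at q4 c5 p4
  have e4 : u (i+4) = (12 + 7 * w) / (31 + 18 * w) := by
    rw [eq_div_iff (by linarith)]
    rw [e3] at p4; field_simp at p4; linarith
  have d5 : w < (1 + w) * t (i+5) := by
    by_contra hh; push Not at hh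
    nlinarith
  have d5' : t (i+5) * (43 + 25 * w) < 12 + 7 * w := by
    rw [e4] at c5; field_simp at c5; nlinarith
  have f1 : w * (43 + 25 * w) < (1 + w) * (12 + 7 * w) := by
    have k1 := mul_lt_mul_of_pos_right d5 (by linarith : (0:ℝ) < 43 + 25 * w)
    have k2 := mul_lt_mul_of_pos_left d5' (by linarith : (0:ℝ) < 1 + w)
    linarith
  -- first two
  have d2 : t (i+2) * (12 + 7 * w) < 7 + 4 * w := by
    have hd : 0 < 12 + 7 * w := by linarith
    by_contra hh; push Not at hh
    have k1 := mul_le_mul_of_nonneg_right hh (by linarith [S.t1 (i+3)] : 0 ≤ 2 - t (i+3))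
    have k2 : t (i+2) * (12 + 7 * w) * (2 - t (i+3)) = 12 + 7 * w := by
      linear_combination (12 + 7 * w) * q2
    linarith
  have d1 : 1 < w * (2 + t (i+2)) := by
    by_contra hh; push Not at hh
    have k1 := mul_le_mul_of_nonneg_left hh tp1.le
    have k2 : t (i+1) * (w * (2 + t (i+2))) = w - w * t (i+1) := by
      linear_combination w * q1
    linarith
  have k1 := mul_lt_mul_of_pos_left d2 wp
  have k2 := mul_lt_mul_of_pos_right d1 (by linarith : (0:ℝ) < 12 + 7 * w)
  nlinarith

end Sys

namespace Sys

variable {a : ℕ → ℤ} {e t u f g : ℕ → ℝ}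

theorem odd_ge (S : Sys a e t u f g) (i : ℕ) (h : Odd (a (i+1))) (h3 : a (i+1) ≠ 3) :
    5 ≤ a (i+1) := by
  have := S.ha i
  have h2 : a (i+1) ≠ 2 := fun h' => not_odd2 h' h
  have h4 : a (i+1) ≠ 4 := fun h' => not_odd4 h' h
  omega

theorem even_ge (S : Sys a e t u f g) (i : ℕ) (h : ¬ Odd (a (i+1))) (h2 : a (i+1) ≠ 2) :
    4 ≤ a (i+1) := by
  have := S.ha i
  have h3 : a (i+1) ≠ 3 := fun h' => h (odd3 h')
  omega

/-- `u (i+1) * (a + 5/8) ≥ 1` -/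
theorem ulow (S : Sys a e t u f g) (i : ℕ) : 1 ≤ u (i+1) * ((a (i+1) : ℝ) + 5/8) := by
  have h := S.hu i
  have p := S.upos i
  have := S.u58 i
  have := S.u0 i
  rcases S.he (i+1) with he | he <;> rw [he] at h <;> nlinarith

theorem r_big0 (S : Sys a e t u f g) : 2/5 ≤ 1 - u 0 + 3 * f 0 := by
  rw [S.u00, S.f00]; norm_num

theorem r_big (S : Sys a e t u f g) (i : ℕ) (h : a (i+1) ≠ 2) :
    2/5 ≤ 1 - u (i+1) + 3 * f (i+1) := by
  have p := S.upos i
  by_cases ho : Odd (a (i+1))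
  · have := S.fodd_nonneg i ho
    linarith
  · have h4 : (4:ℝ) ≤ a (i+1) := by exact_mod_cast S.even_ge i ho h
    have l := S.ulow i
    obtain ⟨i1, i2, i3, i4⟩ := S.finv i
    have hu := S.hu i
    rw [S.feven i ho]
    have key : u (i+1) * (a (i+1) - 2) ≤ 1 - u (i+1) + 3 * -(e (i+1) * u (i+1) * f i) := by
      rcases S.he (i+1) with he | he <;> rw [he] at hu ⊢ <;> nlinarith
    nlinarith

theorem s_two (S : Sys a e t u f g) (i : ℕ) (h : a (i+1) = 2) :
    1/2 ≤ 1 + u (i+1) - 3 * f (i+1) := by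
  have p := S.upos i
  obtain ⟨i1, i2, i3, i4⟩ := S.finv i
  have h0 := S.u0 i
  rw [S.feven i (not_odd2 h)]
  rcases S.he (i+1) with he | he
  · have hu := S.ur i h he
    rw [he]; push_cast at hu
    have : u (i+1) * (2 + 2 * u i) ≤ u (i+1) * (3 + (u i + 3 * f i)) :=
      mul_le_mul_of_nonneg_left (by linarith) p.le
    nlinarith [mul_nonneg p.le h0]
  · have hu := S.ur i h he
    have := S.u12 i he
    rw [he]; push_cast at hu
    have : u (i+1) * (2 - 2 * u i) ≤ u (i+1) * (3 - (u i + 3 * f i)) :=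
      mul_le_mul_of_nonneg_left (by linarith) p.le
    nlinarith [mul_nonneg p.le h0]

theorem s_three_neg (S : Sys a e t u f g) (i : ℕ) (h : a (i+1) = 3) (he : e (i+1) = -1) :
    1 + u (i+1) - 3 * f (i+1) = u (i+1) * (1 - u i + 3 * f i) := by
  have hu := S.ur i h he
  rw [S.fodd i (odd3 h), he]; push_cast at hu
  linear_combination -hu

theorem s_three_pos (S : Sys a e t u f g) (i : ℕ) (h : a (i+1) = 3) (he : e (i+1) = 1) :
    1 + u (i+1) - 3 * f (i+1) = u (i+1) * (1 + u i - 3 * f i) := by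
  have hu := S.ur i h he
  rw [S.fodd i (odd3 h), he]; push_cast at hu
  linear_combination -hu

theorem r_two (S : Sys a e t u f g) (i : ℕ) (h : a (i+1) = 2) (h2 : a (i+2) = 3)
    (h2' : e (i+2) = -1) : 1/20 ≤ 1 - u (i+1) + 3 * f (i+1) := by
  have h' := S.hc1l i h h2'
  have p := S.upos i
  have hu := S.ur i h h'
  have c := S.hc3 i h h2'
  have h0 := S.u0 i
  have h1 := S.u1 i
  have q := S.ht (i+1)
  have t2 := S.t23 (i+2)
  have tp := S.t0 (i+2)
  have tp1 := S.t0 (i+1)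
  simp only [add_assoc, Nat.reduceAdd] at q
  rw [h2] at q
  push_cast at q hu
  have tb : 3/11 ≤ t (i+1) := by
    rcases S.he (i+3) with he | he <;> rw [he] at q <;> nlinarith
  have ub : 3/8 < u i := by nlinarith
  rw [S.feven i (not_odd2 h), h']
  have e1 : 1 - u (i+1) + 3 * -(1 * u (i+1) * f i) = u (i+1) * (1 + u i - 3 * f i) := by
    linear_combination -hu
  rw [e1]
  have up : 8/21 ≤ u (i+1) := by
    have := S.u58 i
    nlinarith
  have s0 : 3/20 ≤ 1 + u i - 3 * f i := by
    cases i with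
    | zero => rw [S.u00] at ub; norm_num at ub
    | succ j =>
      by_cases hj2 : a (j+1) = 2
      · have := S.s_two j hj2; linarith
      · have hj3 := S.ge3 j hj2
        have hj : a (j+1) = 3 := by
          by_contra hn
          have := S.u27 j (by omega); linarith
        have hej : e (j+1) = -1 := by
          apply S.he_ne; intro hh
          have := S.ur j hj hh
          push_cast at this
          nlinarith [S.u0 j]
        rw [S.s_three_neg j hj hej]
        have : 2/5 ≤ 1 - u j + 3 * f j := by
          cases j with
          | zero => exact S.r_big0
          | succ k =>
            apply S.r_big
            intro hk
            exact S.pattern k hk hj hej h h2 h2'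
        nlinarith
  nlinarith

theorem PQ (S : Sys a e t u f g) {b : ℝ} (hb : b^2 + 3*b = 1) (hb0 : 0.3027 < b)
    (hb1 : b < 0.3028) (i : ℕ) :
    (u i ≤ b → 0.33 * (b - u i) ≤ 1 + u i - 3 * f i) ∧
    (b ≤ u i → 0.1 * (u i - b) ≤ 1 + u i - 3 * f i) := by
  induction i with
  | zero => rw [S.u00, S.f00]; constructor <;> intro h <;> norm_num <;> linarith
  | succ i ih =>
    obtain ⟨ihQ, ihP⟩ := ih
    have p := S.upos i
    have p58 := S.u58 (i+1)
    have h0 := S.u0 i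
    by_cases h2 : a (i+1) = 2
    · have := S.s_two i h2
      constructor <;> intro h <;> linarith
    by_cases h3 : a (i+1) = 3
    · rcases S.he (i+1) with he | he
      · rw [S.s_three_pos i h3 he]
        have hu := S.ur i h3 he
        push_cast at hu
        have k : u (i+1) - b = u (i+1) * b * (b - u i) := by
          linear_combination b * hu - u (i+1) * hb
        constructor
        · intro h
          have : b ≤ u i := by
            by_contra hh; push Not at hh
            have : 0 < u (i+1) * b * (b - u i) := by
              apply mul_pos (mul_pos p (by linarith)); linarith
            linarith
          have h1 := ihP this
          have h2 := mul_le_mul_of_nonneg_left h1 p.le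
          have h3 : 0 ≤ u (i+1) * (u i - b) := mul_nonneg p.le (by linarith)
          nlinarith
        · intro h
          have : u i ≤ b := by
            by_contra hh; push Not at hh
            have : 0 < u (i+1) * b * (u i - b) := by
              apply mul_pos (mul_pos p (by linarith)); linarith
            linarith
          have h1 := ihQ this
          have h2 := mul_le_mul_of_nonneg_left h1 p.le
          have h3 : 0 ≤ u (i+1) * (b - u i) := mul_nonneg p.le (by linarith)
          nlinarith
      · rw [S.s_three_neg i h3 he]
        have hu := S.ur i h3 he
        push_cast at hu
        have h12 := S.u12 i he
        have r : 1/20 ≤ 1 - u i + 3 * f i := by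
          cases i with
          | zero => have := S.r_big0; linarith
          | succ j =>
            by_cases hj : a (j+1) = 2
            · exact S.r_two j hj h3 he
            · have := S.r_big j hj; linarith
        constructor
        · intro h; nlinarith
        · intro h; nlinarith
    · have h4 : 4 ≤ a (i+1) := by have := S.ha i; omega
      have h4R : (4:ℝ) ≤ a (i+1) := by exact_mod_cast h4
      have u27 := S.u27 i h4
      refine ⟨fun _ => ?_, fun h => by linarith⟩
      suffices 0.33 ≤ 1 + u (i+1) - 3 * f (i+1) by nlinarith
      obtain ⟨i1, i2, i3, i4⟩ := S.finv i
      have l := S.ulow i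
      have hu := S.hu i
      by_cases ho : Odd (a (i+1))
      · have h5 : (5:ℝ) ≤ a (i+1) := by exact_mod_cast S.odd_ge i ho h3
        rw [S.fodd i ho]
        have key : u (i+1) * (a (i+1) - 3) ≤
            1 + u (i+1) - 3 * (u (i+1) * (1 + e (i+1) * f i)) := by
          rcases S.he (i+1) with he | he <;> rw [he] at hu ⊢ <;> nlinarith
        nlinarith
      · rw [S.feven i ho]
        have key : u (i+1) * (a (i+1) - 1) ≤
            1 + u (i+1) - 3 * -(e (i+1) * u (i+1) * f i) := by
          rcases S.he (i+1) with he | he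
          · rw [he] at hu ⊢; nlinarith
          · have := S.u12 i he
            rw [he] at hu ⊢; nlinarith
        nlinarith

theorem Pstrong (S : Sys a e t u f g) {b : ℝ} (hb : b^2 + 3*b = 1) (hb0 : 0.3027 < b)
    (hb1 : b < 0.3028) (j : ℕ) (h : a (j+1) = 2) (h' : e (j+1) = -1) (hu : b ≤ u j) :
    1.07 * (u j - b) ≤ 1 + u j - 3 * f j := by
  cases j with
  | zero => rw [S.u00] at hu; linarith
  | succ i =>
    by_cases h2 : a (i+1) = 2
    · exact (S.hc4 i h2 (S.hc1l i h2 h') h h').elim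
    have h3 : a (i+1) = 3 := by
      by_contra h3
      have := S.ge3 i h2
      have := S.u27 i (by omega)
      linarith
    have p := S.upos i
    have hu' := S.hu i
    rw [h3] at hu'; push_cast at hu'
    rcases S.he (i+1) with he | he
    · rw [S.s_three_pos i h3 he]
      rw [he] at hu'
      have k : u (i+1) - b = u (i+1) * b * (b - u i) := by
        linear_combination b * hu' - u (i+1) * hb
      have : u i ≤ b := by
        by_contra hh; push Not at hh
        have : 0 < u (i+1) * b * (u i - b) := by
          apply mul_pos (mul_pos p (by linarith)); linarith
        linarith
      have h1 := (S.PQ hb hb0 hb1 i).1 this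
      have h2 := mul_le_mul_of_nonneg_left h1 p.le
      have h3 : 0 ≤ u (i+1) * (b - u i) := mul_nonneg p.le (by linarith)
      nlinarith
    · rw [S.s_three_neg i h3 he]
      have : 2/5 ≤ 1 - u i + 3 * f i := by
        cases i with
        | zero => exact S.r_big0
        | succ k =>
          apply S.r_big
          intro hk
          exact S.hc5 k hk (S.hc1l k hk he) h3 he h h'
      have := S.u25 i (by omega)
      nlinarith

end Sys

namespace Sys

variable {a : ℕ → ℤ} {e t u f g : ℕ → ℝ}

theorem le_of_mul_one {x d c : ℝ} (h : x * d = 1) (hx : 0 < x) (hc : 1 ≤ c * d) : x ≤ c := by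
  have hd : 0 < d := by by_contra hh; nlinarith
  by_contra hh; push Not at hh
  nlinarith [mul_lt_mul_of_pos_right hh hd]

theorem ge_of_mul_one {x d c : ℝ} (h : x * d = 1) (hx : 0 < x) (hc : c * d ≤ 1) : c ≤ x := by
  have hd : 0 < d := by by_contra hh; nlinarith
  by_contra hh; push Not at hh
  nlinarith [mul_lt_mul_of_pos_right hh hd]

set_option maxHeartbeats 1000000 in
theorem claimC_step (S : Sys a e t u f g) {r : ℝ} (hr : r^2 = 10) (hr0 : 3.1622 < r)
    (hr1 : r < 3.1623) (δ : ℝ) (hδ : 0 ≤ δ)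
    (IH : ∀ n, e (n+1) = -1 → 3 ≤ a (n+1) → 0.36 ≤ u n → t n - g n ≤ (4 - r)/3 + δ)
    (n : ℕ) (hen : e (n+1) = -1) (han : 3 ≤ a (n+1)) (hun : 0.36 ≤ u n) :
    t n - g n ≤ (4 - r)/3 + δ/10 := by
  have tp := S.t0 n
  have tp1 := S.t0 (n+1)
  have gp := S.g0 n
  have t25 := S.t25 n han
  have ht := S.ht n
  by_cases h3 : a (n+1) = 3
  · have hg := S.godd n (odd3 h3)
    have hg1 := S.gt (n+1)
    have t23 := S.t23 (n+1)
    rw [h3] at ht; push_cast at ht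
    have k : t n - g n ≤ t n * t (n+1) := by rw [hg]; nlinarith
    rcases S.he (n+2) with he | he
    · rw [he] at ht; nlinarith
    · have := S.t12 (n+1) he
      nlinarith
  have h4R : (4:ℝ) ≤ a (n+1) := by exact_mod_cast (by omega : 4 ≤ a (n+1))
  rcases S.he (n+2) with he | he
  · rw [he] at ht; nlinarith
  by_cases h4 : a (n+1) = 4
  swap
  · have h5R : (5:ℝ) ≤ a (n+1) := by exact_mod_cast (by omega : 5 ≤ a (n+1))
    have := S.t12 (n+1) he
    rw [he] at ht; nlinarith
  rw [h4, he] at ht; push_cast at ht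
  by_cases h2 : a (n+2) = 2
  swap
  · have := S.t25 (n+1) (S.ge3 (n+1) h2)
    nlinarith
  have he3 := S.hc1r (n+1) h2 he
  have c2 := S.hc2 (n+1) h2 he
  have hu1 := S.ur n h4 hen
  have q1 := S.tr (n+1) h2 he3
  have g0 := S.geven n (not_odd4 h4)
  have g1 := S.geven (n+1) (not_odd2 h2)
  have tp2 := S.t0 (n+2)
  simp only [add_assoc, Nat.reduceAdd] at he3 c2 q1 g1
  push_cast at hu1 q1
  have up := S.upos n
  have u12 := S.u12 n hen
  have ub : 100/364 ≤ u (n+1) := ge_of_mul_one hu1 up (by linarith)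
  have t2l : 0.3787 ≤ t (n+2) := by nlinarith
  have X1 : (4 - r)/2 * (2 + (r-2)/3) = 1 := by linear_combination -hr/6
  have X0 : (4 - r)/3 * (4 - (4-r)/2) = 1 := by linear_combination -hr/6
  have X2 : (r-2)/3 * (2 + (r-2)/2) = 1 := by linear_combination hr/6
  have X3 : (r-2)/2 * (2 - (4-r)/3) = 1 := by linear_combination hr/6
  have d0 : t n - (4-r)/3 = t n * ((4-r)/3) * (t (n+1) - (4-r)/2) := by
    linear_combination (4-r)/3 * ht - t n * X0
  have d1 : t (n+1) - (4-r)/2 = -(t (n+1) * ((4-r)/2) * (t (n+2) - (r-2)/3)) := by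
    linear_combination (4-r)/2 * q1 - t (n+1) * X1
  have d1' : t n - (4-r)/3 =
      -((t n * ((4-r)/3)) * (t (n+1) * ((4-r)/2)) * (t (n+2) - (r-2)/3)) := by
    rw [d0, d1]; ring
  have pp : 0 ≤ (t n * ((4-r)/3)) * (t (n+1) * ((4-r)/2)) := by
    apply mul_nonneg <;> apply mul_nonneg <;> linarith
  by_cases hx : (r-2)/3 ≤ t (n+2)
  · nlinarith [mul_nonneg pp (sub_nonneg.2 hx)]
  push Not at hx
  have t2u : t (n+2) < 0.38744 := by linarith
  have tp3 := S.t0 (n+3)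
  by_cases h32 : a (n+3) = 2
  swap
  · have a3 := S.ge3 (n+2) h32
    have h33 : a (n+3) = 3 := by
      by_contra hh
      have := S.t27 (n+2) (by simp only [add_assoc, Nat.reduceAdd] at a3 ⊢; omega)
      linarith
    have q2 := S.ht (n+2)
    have g2 := S.godd (n+2) (odd3 h33)
    have hg3 := S.gt (n+3)
    simp only [add_assoc, Nat.reduceAdd] at q2 g2
    rw [h33] at q2; push_cast at q2
    have he4 : e (n+4) = -1 := by
      apply S.he_ne; intro hh; rw [hh] at q2
      have := mul_pos tp2 tp3
      linarith
    rw [he4] at q2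
    have t3u : t (n+3) ≤ 0.42 := by
      by_contra hh; push Not at hh
      have := mul_lt_mul_of_pos_left hh tp2
      linarith
    have g2l : 0.21 ≤ g (n+2) := by
      have : 0.3787 * 0.58 ≤ g (n+2) := by
        rw [g2]; exact mul_le_mul t2l (by linarith) (by norm_num) tp2.le
      linarith
    have t1l : 0.41 ≤ t (n+1) := ge_of_mul_one q1 tp1 (by linarith)
    have t1u : t (n+1) ≤ 0.4205 := le_of_mul_one q1 tp1 (by linarith)
    have tl : 0.25 ≤ t n := ge_of_mul_one ht tp (by linarith)
    have tu : t n ≤ 0.28 := le_of_mul_one ht tp (by linarith)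
    have g1l : 0.41 * 0.21 ≤ g (n+1) := by
      rw [g1]; exact mul_le_mul t1l g2l (by norm_num) tp1.le
    have g0l : 0.25 * (0.41 * 0.21) ≤ g n := by
      rw [g0]; exact mul_le_mul tl g1l (by norm_num) tp.le
    linarith
  have q2 := S.ht (n+2)
  have g2 := S.geven (n+2) (not_odd2 h32)
  simp only [add_assoc, Nat.reduceAdd] at q2 g2
  rw [h32] at q2; push_cast at q2
  have he4 : e (n+4) = 1 := by
    rcases S.he (n+4) with hh | hh
    · exact hh
    · rw [hh] at q2
      have := mul_pos tp2 tp3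
      linarith
  rw [he4] at q2
  have t3l : 1/2 ≤ t (n+3) := by
    by_contra hh; push Not at hh
    have := mul_lt_mul_of_pos_left hh tp2
    linarith
  obtain ⟨h42, he5⟩ := S.t_big (n+3) t3l
  have c3 := S.hc3 (n+3) h42 he5
  have hu3 := S.ur (n+2) h32 he3
  have hu4 := S.ur (n+3) h42 he4
  have q3 := S.tr (n+3) h42 he5
  have g3 := S.geven (n+3) (not_odd2 h42)
  have tp4 := S.t0 (n+4)
  simp only [add_assoc, Nat.reduceAdd] at *
  push_cast at hu3 hu4 q3
  have u2p := S.u0 (n+2)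
  have u3p := S.upos (n+2)
  have u4p := S.upos (n+3)
  simp only [add_assoc, Nat.reduceAdd] at u3p u4p
  have u3u : u (n+3) ≤ 1/2 := le_of_mul_one hu3 u3p (by linarith)
  have u4l : 0.36 ≤ u (n+4) := ge_of_mul_one hu4 u4p (by linarith)
  have t4u : t (n+4) < 1/3 := by
    by_contra hh; push Not at hh
    have := mul_le_mul_of_nonneg_right hh (by linarith : 0 ≤ 1 + u (n+3))
    linarith
  have a5 : 3 ≤ a (n+5) := by
    apply S.ge3 (n+4); intro hh
    have q4 := S.ht (n+4)
    simp only [add_assoc, Nat.reduceAdd] at q4 hh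
    rw [hh] at q4; push_cast at q4
    have := S.t0 (n+5)
    have := S.t1 (n+5)
    rcases S.he (n+6) with h6 | h6 <;> rw [h6] at q4
    · have := ge_of_mul_one (c := 1/3) q4 tp4 (by linarith)
      linarith
    · have := ge_of_mul_one (c := 1/3) q4 tp4 (by linarith)
      linarith
  have ih := IH (n+4) he5 a5 u4l
  have d2 : t (n+2) - (r-2)/3 = -(t (n+2) * ((r-2)/3) * (t (n+3) - (r-2)/2)) := by
    linear_combination (r-2)/3 * q2 - t (n+2) * X2
  have d3 : t (n+3) - (r-2)/2 = t (n+3) * ((r-2)/2) * (t (n+4) - (4-r)/3) := by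
    linear_combination (r-2)/2 * q3 - t (n+3) * X3
  have D : t n - (4-r)/3 = (t n * t (n+1) * t (n+2) * t (n+3)) *
      (((4-r)/3) * ((4-r)/2) * ((r-2)/3) * ((r-2)/2)) * (t (n+4) - (4-r)/3) := by
    rw [d1', d2, d3]; ring
  have G : g n = (t n * t (n+1) * t (n+2) * t (n+3)) * g (n+4) := by
    rw [g0, g1, g2, g3]; ring
  have gp4 := S.g0 (n+4)
  have P0 : 0 ≤ t n * t (n+1) * t (n+2) * t (n+3) := by positivity
  have P1 : t n * t (n+1) * t (n+2) * t (n+3) ≤ 1 := by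
    have := S.t1 (n+1)
    have := S.t1 n
    have := S.t1 (n+2)
    have := S.t1 (n+3)
    apply mul_le_one₀ (mul_le_one₀ (mul_le_one₀ _ _ _) _ _) <;> linarith
  generalize t n * t (n+1) * t (n+2) * t (n+3) = P at *
  have E4 : ((4-r)/3) * ((4-r)/2) = (26 - 8*r)/6 := by linear_combination hr/6
  have E5 : ((r-2)/3) * ((r-2)/2) = (14 - 4*r)/6 := by linear_combination hr/6
  have Q0 : 0 ≤ ((4-r)/3) * ((4-r)/2) * ((r-2)/3) * ((r-2)/2) := by
    rw [mul_assoc (((4-r)/3) * ((4-r)/2)), E4, E5]; exact mul_nonneg (by linarith) (by linarith)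
  have Q1 : ((4-r)/3) * ((4-r)/2) * ((r-2)/3) * ((r-2)/2) ≤ 1/10 := by
    rw [mul_assoc (((4-r)/3) * ((4-r)/2)), E4, E5]
    have : (26 - 8*r)/6 * ((14 - 4*r)/6) ≤ 0.2 * 0.3 :=
      mul_le_mul (by linarith) (by linarith) (by linarith) (by norm_num)
    linarith
  generalize ((4-r)/3) * ((4-r)/2) * ((r-2)/3) * ((r-2)/2) = Q at *
  have k1 : P * Q * (t (n+4) - (4-r)/3) ≤ P * Q * (g (n+4) + δ) :=
    mul_le_mul_of_nonneg_left (by linarith) (mul_nonneg P0 Q0)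
  have k2 : P * g (n+4) * Q ≤ P * g (n+4) * 1 :=
    mul_le_mul_of_nonneg_left (by linarith) (mul_nonneg P0 gp4)
  have k3 : P * Q ≤ 1 * (1/10) := mul_le_mul P1 Q1 Q0 (by norm_num)
  have k4 := mul_le_mul_of_nonneg_right k3 hδ
  have : t n - g n - (4-r)/3 ≤ P * Q * (g (n+4) + δ) - P * g (n+4) := by linarith
  linarith

theorem claimC (S : Sys a e t u f g) {r : ℝ} (hr : r^2 = 10) (hr0 : 3.1622 < r)
    (hr1 : r < 3.1623)
    (n : ℕ) (hen : e (n+1) = -1) (han : 3 ≤ a (n+1)) (hun : 0.36 ≤ u n) :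
    t n - g n ≤ (4 - r)/3 := by
  have key : ∀ k : ℕ, ∀ n, e (n+1) = -1 → 3 ≤ a (n+1) → 0.36 ≤ u n →
      t n - g n ≤ (4 - r)/3 + (1/10)^k := by
    intro k
    induction k with
    | zero =>
      intro n _ _ _
      have := S.t1 n
      have := S.g0 n
      norm_num; linarith
    | succ k ih =>
      intro n h1 h2 h3
      have := S.claimC_step hr hr0 hr1 ((1/10)^k) (by positivity) ih n h1 h2 h3
      rw [pow_succ]; linarith
  refine le_of_forall_pos_le_add fun δ hδ => ?_
  obtain ⟨k, hk⟩ := exists_pow_lt_of_lt_one hδ (by norm_num : (1/10:ℝ) < 1)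
  have := key k n hen han hun
  linarith

end Sys

/-- The numerical constants: `r = √10`, `b = (√13-3)/2`, `K` four times the target. -/
structure Cst (r b K : ℝ) : Prop where
  hr : r^2 = 10
  hr0 : 3.1622 < r
  hr1 : r < 3.1623
  hb : b^2 + 3*b = 1
  hb0 : 0.3027 < b
  hb1 : b < 0.3028
  K0 : 0 < K
  K1 : K ≤ 0.159
  hK : K * (3 * (13 - 5*b - (4-r)/3*(5-2*b))) = (8 - 4*b) * (1 - (4-r)/3)

namespace Sys

variable {a : ℕ → ℤ} {e t u f g : ℕ → ℝ}

set_option maxHeartbeats 2000000 in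
/-- the sharp case, real-number core -/
theorem sharp_core {r b K u f α g : ℝ} (C : Cst r b K) (hu0 : 0 ≤ u) (hu1 : u ≤ 1/2)
    (hs : 0 ≤ 1 + u - 3 * f) (hs' : b ≤ u → 1.07 * (u - b) ≤ 1 + u - 3 * f)
    (hα0 : 0 < α) (hα1 : α < 1) (hg : 0 ≤ g) (hαg : α - g ≤ (4-r)/3) :
    K * (13 - 5*u - α * (5 - 2*u)) ≤ (3 - u - f) * (1 - α + g) := by
  obtain ⟨hr, hr0, hr1, hb, hb0, hb1, K0, K1, hK⟩ := C
  obtain ⟨x, hx⟩ : ∃ x, x = (4-r)/3 := ⟨_, rfl⟩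
  rw [← hx] at hK hαg
  have x0 : 0.279 < x := by linarith
  have x1 : x < 0.28 := by linarith
  have Cp : 0 < 13 - 5*b - x*(5-2*b) := by nlinarith
  have c12 : 0 < 13 - 5*u - x*(5-2*u) := by nlinarith
  have B : (1-x)*(13 - 5*u - α * (5 - 2*u)) ≤ (1 - α + g) * (13 - 5*u - x*(5-2*u)) := by
    have k1 : 0 ≤ (x - α + g) * (8 - 3*u) := mul_nonneg (by linarith) (by linarith)
    have k2 : 0 ≤ g * ((5 - 2*u)*(1-x)) :=
      mul_nonneg hg (mul_nonneg (by linarith) (by linarith))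
    nlinarith
  have Cc : K * (13 - 5*u - x*(5-2*u)) ≤ (3 - u - f) * (1 - x) := by
    have key : (u-b)*(12-4*x) ≤ (1+u-3*f) * (13 - 5*b - x*(5-2*b)) := by
      rcases le_total b u with h | h
      · have h1 := hs' h
        have h2 := mul_le_mul_of_nonneg_right h1 Cp.le
        have h3 : 12 - 4*x ≤ 1.07 * (13 - 5*b - x*(5-2*b)) := by nlinarith
        have h4 := mul_le_mul_of_nonneg_left h3 (sub_nonneg.2 h)
        linarith
      · have h1 := mul_nonneg hs Cp.le
        have h2 : 0 ≤ (b-u)*(12-4*x) := mul_nonneg (by linarith) (by linarith)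
        linarith
    have k2 : (8-4*b)*(13 - 5*u - x*(5-2*u)) ≤
        (8 - 4*u + (1+u-3*f)) * (13 - 5*b - x*(5-2*b)) := by nlinarith
    have k3 := mul_le_mul_of_nonneg_right k2 (by linarith : 0 ≤ 1 - x)
    have k4 : (K * (13 - 5*u - x*(5-2*u))) * (3 * (13 - 5*b - x*(5-2*b))) =
      (8-4*b)*(13 - 5*u - x*(5-2*u)) * (1-x) := by
        linear_combination (13 - 5*u - x*(5-2*u)) * hK
    have k5 : (K * (13 - 5*u - x*(5-2*u))) * (3 * (13 - 5*b - x*(5-2*b))) ≤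
      ((3 - u - f) * (1 - x)) * (3 * (13 - 5*b - x*(5-2*b))) := by
        rw [k4]; linarith
    exact le_of_mul_le_mul_right k5 (by linarith)
  have F0 : 0 ≤ 3 - u - f := by linarith
  have G0 : 0 ≤ 13 - 5*u - α * (5 - 2*u) := by nlinarith
  have l1 := mul_le_mul_of_nonneg_left B F0
  have l2 := mul_le_mul_of_nonneg_right Cc G0
  refine le_of_mul_le_mul_right (a := 13 - 5*u - x*(5-2*u)) ?_ c12
  nlinarith

theorem sharp (S : Sys a e t u f g) {r b K : ℝ} (C : Cst r b K) (m : ℕ)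
    (h1 : a (m+1) = 2) (h1' : e (m+1) = -1) (h2 : a (m+2) = 2) (h3 : a (m+3) = 3)
    (h3' : e (m+3) = -1) (h4' : e (m+4) = -1) (h4 : 3 ≤ a (m+4)) :
    K * (1 - t (m+3) * u (m+3)) ≤ (1 - u (m+3) - f (m+3)) * (1 - t (m+3) + g (m+3)) := by
  have h2' := S.hc1l (m+1) h2 h3'
  have p1 := S.ur m h1 h1'
  have p2 := S.ur (m+1) h2 h2'
  have p3 := S.ur (m+2) h3 h3'
  have f1 := S.feven m (not_odd2 h1)
  have f2 := S.feven (m+1) (not_odd2 h2)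
  have f3 := S.fodd (m+2) (odd3 h3)
  have w0 := S.u0 m
  have w1 := S.u12 m h1'
  simp only [add_assoc, Nat.reduceAdd] at *
  rw [h1'] at f1
  rw [h2'] at f2
  rw [h3'] at f3
  push_cast at p1 p2 p3
  have e1 : u (m+1) = 1 / (2 - u m) := by rw [eq_div_iff (by linarith)]; linarith
  have e2 : u (m+2) = (2 - u m) / (5 - 2 * u m) := by
    rw [eq_div_iff (by linarith)]
    have : (2 - u m) ≠ 0 := by linarith
    rw [e1] at p2; field_simp at p2; linarith
  have e3 : u (m+3) = (5 - 2 * u m) / (13 - 5 * u m) := by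
    rw [eq_div_iff (by linarith)]
    have : (5 - 2 * u m) ≠ 0 := by linarith
    rw [e2] at p3; field_simp at p3; linarith
  have n2 : (2 - u m) ≠ 0 := by linarith
  have n5 : (5 - 2 * u m) ≠ 0 := by linarith
  have n13 : (13 - 5 * u m) ≠ 0 := by linarith
  have F : 1 - u (m+3) - f (m+3) = (3 - u m - f m) / (13 - 5 * u m) := by
    rw [f3, f2, f1, e1, e2, e3]; field_simp; ring
  have ul : 0.36 ≤ u (m+3) := by
    rw [e3, le_div_iff₀ (by linarith)]; linarith
  have cC := S.claimC C.hr C.hr0 C.hr1 (m+3) h4' h4 ul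
  have core := sharp_core (u := u m) (f := f m) C w0 w1 (by linarith [(S.finv m).2.1])
    (S.Pstrong C.hb C.hb0 C.hb1 m h1 h1') (S.t0 (m+3)) (S.t1 (m+3)) (S.g0 (m+3)) cC
  rw [F, e3]
  have : K * (1 - t (m+3) * ((5 - 2 * u m) / (13 - 5 * u m))) =
      (K * (13 - 5*u m - t (m+3) * (5 - 2*u m))) / (13 - 5 * u m) := by field_simp
  rw [this, div_mul_eq_mul_div]
  exact div_le_div_of_nonneg_right core (by linarith)

/-- `a=3, ε=+` -/
theorem R3p (S : Sys a e t u f g) (i : ℕ) (h : a (i+1) = 3) (h' : e (i+1) = 1) :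
    1/4 ≤ 1 - u (i+1) - f (i+1) := by
  have p := S.upos i
  have hu := S.ur i h h'
  have hf := S.fodd i (odd3 h)
  rw [h'] at hf; push_cast at hu
  have : 1 - u (i+1) - f (i+1) = u (i+1) * (1 + u i - f i) := by
    rw [hf]; linear_combination -hu
  rw [this]
  have h1 := (S.finv i).2.1
  have h2 := S.fabs i
  have h0 := S.u0 i
  have : 1/4 * (3 + u i) ≤ 1 + u i - f i := by
    rcases le_total (u i) (1/4) with h | h <;> linarith
  have := mul_le_mul_of_nonneg_left this p.le
  linarith

theorem R3m (S : Sys a e t u f g) (i : ℕ) (h : a (i+1) = 3) (h' : e (i+1) = -1)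
    (hp : i = 0 ∨ a i ≠ 2) :
    0.265 - 0.106 * u (i+1) ≤ 1 - u (i+1) - f (i+1) := by
  have p := S.upos i
  have hu := S.ur i h h'
  have hf := S.fodd i (odd3 h)
  have u12 := S.u12 i h'
  rw [h'] at hf; push_cast at hu
  have : 1 - u (i+1) - f (i+1) = u (i+1) * (1 - u i + f i) := by
    rw [hf]; linear_combination -hu
  rw [this]
  have key : -0.311 + 0.735 * u i ≤ f i := by
    cases i with
    | zero => rw [S.u00, S.f00]; norm_num
    | succ j =>
      have hj : a (j+1) ≠ 2 := by simpa using hp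
      have up := S.upos j
      by_cases ho : Odd (a (j+1))
      · have := S.fodd_nonneg j ho
        linarith
      · have h4 : (4:ℝ) ≤ a (j+1) := by exact_mod_cast S.even_ge j ho hj
        rw [S.feven j ho]
        have hu' := S.hu j
        obtain ⟨i1, i2, i3, i4⟩ := S.finv j
        have h0 := S.u0 j
        have h1 := S.u58 j
        rcases S.he (j+1) with he | he
        · rw [he] at hu' ⊢
          have : 0 ≤ u (j+1) * (0.311 * (a (j+1) + 1 * u j) - 0.735 - f j) :=
            mul_nonneg up.le (by linarith)
          linarith
        · have := S.u12 j he
          rw [he] at hu' ⊢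
          have : 0 ≤ u (j+1) * (0.311 * (a (j+1) + -1 * u j) - 0.735 + f j) :=
            mul_nonneg up.le (by linarith)
          linarith
  have : 0.265 * (3 - u i) - 0.106 ≤ 1 - u i + f i := by linarith
  have := mul_le_mul_of_nonneg_left this p.le
  linarith

/-- reduction to a bound on the past factor -/
theorem easyV3 {K R s t u g : ℝ} (K0 : 0 < K) (K1 : K ≤ 0.159) (hs : s = 1 ∨ s = -1 ∧ t < 2/5)
    (t0 : 0 < t) (u0 : 0 ≤ u) (u1 : u ≤ 5/8) (g0 : 0 ≤ g)
    (hR : 0.265 - 0.106 * u ≤ R) : K * (1 + s * t * u) ≤ R * (1 + s * t + g) := by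
  have R0 : 0 ≤ R := by linarith
  have tu := mul_nonneg t0.le u0
  have Rg := mul_nonneg R0 g0
  rcases hs with hs | ⟨hs, ht⟩
  · rw [hs]
    have : K * (1 + 1 * t * u) ≤ 0.159 * (1 + 1 * t * u) :=
      mul_le_mul_of_nonneg_right K1 (by linarith)
    have : 0.159 * (1 + t) ≤ R * (1 + t) := mul_le_mul_of_nonneg_right (by linarith) (by linarith)
    have : t * u ≤ t * 1 := mul_le_mul_of_nonneg_left (by linarith) t0.le
    nlinarith
  · rw [hs]
    have h1 : t * u ≤ t * 1 := mul_le_mul_of_nonneg_left (by linarith) t0.le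
    have : K * (1 + -1 * t * u) ≤ 0.159 * (1 + -1 * t * u) :=
      mul_le_mul_of_nonneg_right K1 (by linarith)
    have : (0.265 - 0.106 * u) * (1 - t) ≤ R * (1 - t) :=
      mul_le_mul_of_nonneg_right hR (by linarith)
    have : 0 ≤ (1 - u) * (0.106 - 0.265 * t) := mul_nonneg (by linarith) (by linarith)
    nlinarith

set_option maxHeartbeats 2000000 in
theorem V3main (S : Sys a e t u f g) {r b K : ℝ} (C : Cst r b K) (n : ℕ)
    (H : e (n+1) = 1 ∨ 3 ≤ a (n+1)) :
    K * (1 + e (n+1) * t n * u n) ≤ (1 - u n - f n) * (1 + e (n+1) * t n + g n) := by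
  have K0 := C.K0
  have K1 := C.K1
  have hs : e (n+1) = 1 ∨ e (n+1) = -1 ∧ t n < 2/5 := by
    rcases S.he (n+1) with h | h
    · exact Or.inl h
    · refine Or.inr ⟨h, S.t25 n (H.resolve_left (by rw [h]; norm_num))⟩
  have t0 := S.t0 n
  have g0 := S.g0 n
  have u0 := S.u0 n
  have u58 := S.u58 n
  cases n with
  | zero =>
    apply easyV3 K0 K1 hs t0 u0 u58 g0
    rw [S.u00, S.f00]; norm_num
  | succ i =>
  have up := S.upos i
  have w0 := S.u0 i
  have w58 := S.u58 i
  obtain ⟨i1, i2, i3, i4⟩ := S.finv i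
  by_cases h4 : 4 ≤ a (i+1)
  · apply easyV3 K0 K1 hs t0 u0 u58 g0
    have := S.u27 i h4
    have := (S.finv (i+1)).2.1
    linarith
  by_cases h2 : a (i+1) = 2
  · have hf := S.feven i (not_odd2 h2)
    rcases S.he (i+1) with he | he
    · apply easyV3 K0 K1 hs t0 u0 u58 g0
      have hu := S.ur i h2 he
      rw [he] at hf; push_cast at hu
      have : 1 - u (i+1) - f (i+1) = u (i+1) * (1 + u i + f i) := by
        rw [hf]; linear_combination -hu
      rw [this]
      have : u (i+1) * (1/3 * (2 + 1 * u i)) ≤ u (i+1) * (1 + u i + f i) :=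
        mul_le_mul_of_nonneg_left (by linarith) up.le
      linarith
    · have he' := S.hc1r i h2 he
      have c2 := S.hc2 i h2 he
      have hu := S.ur i h2 he
      rw [he] at hf; push_cast at hu
      have hR : 1 - u (i+1) - f (i+1) = u (i+1) * (1 - u i - f i) := by
        rw [hf]; linear_combination -hu
      have N : 0.159 * (2 - 2 * u i + u i^2) ≤ 1 - u i - f i := by
        cases i with
        | zero => rw [S.he1] at he; norm_num at he
        | succ j =>
          have vp := S.upos j
          by_cases h4 : 4 ≤ a (j+1)
          · have := S.u27 j h4
            nlinarith
          by_cases h22 : a (j+1) = 2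
          · exact (S.hc4 j h22 (S.hc1l j h22 he) h2 he).elim
          have h3 : a (j+1) = 3 := by have := S.ha j; omega
          have v25 := S.u25 j (by omega)
          rcases S.he (j+1) with hj | hj
          · have := S.R3p j h3 hj
            have hv := S.ur j h3 hj
            push_cast at hv
            have : 8/29 ≤ u (j+1) := ge_of_mul_one hv vp (by linarith [S.u58 j])
            nlinarith
          · have hv := S.ur j h3 hj
            push_cast at hv
            have v3 : 1/3 ≤ u (j+1) := ge_of_mul_one hv vp (by linarith [S.u0 j])
            have := S.R3m j h3 hj (by
              cases j with
              | zero => left; rfl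
              | succ k =>
                right; intro hk
                exact S.hc5 k hk (S.hc1l k hk hj) h3 hj h2 he)
            nlinarith [mul_nonneg (by linarith : 0 ≤ 1 - u (j+1))
              (by linarith : 0 ≤ 3 * u (j+1) - 1)]
      rw [hR, he']
      have u12 := S.u12 i he
      have NN : 0 ≤ 1 - u i - f i := by nlinarith
      have tu := mul_nonneg t0.le u0
      have k1 : K * (1 + 1 * t (i+1) * u (i+1)) ≤ 0.159 * (1 + 1 * t (i+1) * u (i+1)) :=
        mul_le_mul_of_nonneg_right K1 (by linarith)
      have k2 := mul_le_mul_of_nonneg_right N (by linarith : 0 ≤ 1 + t (i+1))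
      have k3 : 0 ≤ (1 - u i) * (t (i+1) * (1 - u i) - u i) :=
        mul_nonneg (by linarith) (by linarith)
      have k4 : 0.159 * (2 - u i + t (i+1)) ≤ (1 - u i - f i) * (1 + t (i+1)) := by nlinarith
      have k5 := mul_le_mul_of_nonneg_left k4 up.le
      have k6 : 0 ≤ u (i+1) * (1 - u i - f i) * g (i+1) :=
        mul_nonneg (mul_nonneg up.le NN) g0
      nlinarith
  have h3 : a (i+1) = 3 := by have := S.ha i; omega
  rcases S.he (i+1) with he | he
  · apply easyV3 K0 K1 hs t0 u0 u58 g0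
    have := S.R3p i h3 he
    have hv := S.ur i h3 he
    push_cast at hv
    have : 8/29 ≤ u (i+1) := ge_of_mul_one hv up (by linarith [S.u58 i])
    linarith
  by_cases hp : i = 0 ∨ a i ≠ 2
  · exact easyV3 K0 K1 hs t0 u0 u58 g0 (S.R3m i h3 he hp)
  push Not at hp
  obtain ⟨hi0, hi2⟩ := hp
  obtain ⟨j, rfl⟩ := Nat.exists_eq_succ_of_ne_zero hi0
  simp only [Nat.succ_eq_add_one] at *
  have hej := S.hc1l j hi2 he
  have c3 := S.hc3 j hi2 he
  have hf1 := S.feven j (not_odd2 hi2)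
  have hf2 := S.fodd (j+1) (odd3 h3)
  have hu1 := S.ur j hi2 hej
  have hu2 := S.ur (j+1) h3 he
  have ht1 := S.tr (j+1) h3 (s := e (j+3)) rfl
  have t1p := S.t0 (j+1)
  simp only [add_assoc, Nat.reduceAdd] at *
  rw [hej] at hf1
  rw [he] at hf2
  push_cast at hu1 hu2 ht1
  have z0 := S.u0 j
  have z58 := S.u58 j
  have zf := S.finv j
  have e1 : u (j+1) = 1 / (2 + u j) := by rw [eq_div_iff (by linarith)]; linarith
  have e2 : u (j+2) = (2 + u j) / (5 + 3 * u j) := by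
    rw [eq_div_iff (by linarith)]
    rw [e1] at hu2; field_simp at hu2; linarith
  have RR : 1 - u (j+2) - f (j+2) = (1 + u j - f j) / (5 + 3 * u j) := by
    rw [hf2, hf1, e1, e2]; field_simp; ring
  have zt : 1 < u j * (2 + e (j+3) * t (j+2)) := by
    by_contra hh; push Not at hh
    have := mul_le_mul_of_nonneg_left hh t1p.le
    nlinarith
  rcases hs with hs | ⟨hs, ht⟩
  · rw [hs] at zt ⊢
    by_cases hj2 : 3 ≤ a j ∨ j = 0
    · have z25 : u j ≤ 2/5 := by
        rcases hj2 with h | h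
        · cases j with
          | zero => rw [S.u00]; norm_num
          | succ k => exact S.u25 k h
        · rw [h, S.u00]; norm_num
      have t5 : 1/2 ≤ t (j+2) := by nlinarith
      have R1 : 2/15 ≤ 1 - u (j+2) - f (j+2) := by
        rw [RR, le_div_iff₀ (by linarith)]; linarith
      have u2 : u (j+2) ≤ 0.4 := by
        rw [e2, div_le_iff₀ (by linarith)]; linarith
      have tu : t (j+2) * u (j+2) ≤ t (j+2) * 0.4 := mul_le_mul_of_nonneg_left u2 t0.le
      have k1 : K * (1 + 1 * t (j+2) * u (j+2)) ≤ 0.159 * (1 + 1 * t (j+2) * u (j+2)) :=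
        mul_le_mul_of_nonneg_right K1 (by nlinarith)
      have k2 : 2/15 * (1 + t (j+2)) ≤ (1 - u (j+2) - f (j+2)) * (1 + 1 * t (j+2) + g (j+2)) :=
        mul_le_mul R1 (by linarith) (by linarith) (by linarith)
      linarith
    · push Not at hj2
      obtain ⟨hj3, hj0⟩ := hj2
      obtain ⟨k, rfl⟩ := Nat.exists_eq_succ_of_ne_zero hj0
      simp only [Nat.succ_eq_add_one] at *
      have hk2 : a (k+1) = 2 := by have := S.ha k; omega
      have hfk := S.feven k (not_odd2 hk2)
      have ukp := S.upos k
      obtain ⟨l1, l2, l3, l4⟩ := S.finv k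
      have y0 := S.u0 k
      have big : 1 + 2/3 * u (k+1) ≤ 1 + u (k+1) - f (k+1) ∨
          4/3 ≤ 1 + u (k+1) - f (k+1) := by
        rcases S.he (k+1) with h | h
        · left
          rw [h] at hfk
          rw [hfk]
          have : 0 ≤ u (k+1) * (1/3 + f k) := mul_nonneg ukp.le (by linarith)
          linarith
        · right
          have huk := S.ur k hk2 h
          push_cast at huk
          rw [h] at hfk
          rw [hfk]
          have : 0 ≤ u (k+1) * ((1 + u k)/3 - f k) := mul_nonneg ukp.le (by linarith)
          linarith
      have R1 : 0.159 ≤ 1 - u (k+1+2) - f (k+1+2) := by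
        rw [RR, le_div_iff₀ (by linarith)]
        rcases big with h | h <;> linarith
      have tu : t (k+1+2) * u (k+1+2) ≤ t (k+1+2) * 1 :=
        mul_le_mul_of_nonneg_left (by linarith) t0.le
      have k1 : K * (1 + 1 * t (k+1+2) * u (k+1+2)) ≤ 0.159 * (1 + 1 * t (k+1+2) * u (k+1+2)) :=
        mul_le_mul_of_nonneg_right K1 (by nlinarith)
      have k2 : 0.159 * (1 + t (k+1+2)) ≤
          (1 - u (k+1+2) - f (k+1+2)) * (1 + 1 * t (k+1+2) + g (k+1+2)) :=
        mul_le_mul R1 (by linarith) (by linarith) (by linarith)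
      linarith
  · rw [hs] at zt
    have z12 : 1/2 < u j := by nlinarith
    cases j with
    | zero => rw [S.u00] at z12; norm_num at z12
    | succ k =>
      have hk2 : a (k+1) = 2 := by
        by_contra hh
        have := S.u25 k (S.ge3 k hh)
        linarith
      have hk' : e (k+1) = -1 := by
        apply S.he_ne; intro hh
        have := S.ur k hk2 hh
        push_cast at this
        nlinarith [mul_nonneg (S.u0 k) z0]
      have a4 : 3 ≤ a (k+1+3) := H.resolve_left (by rw [hs]; norm_num)
      have := S.sharp C k hk2 hk' hi2 h3 he hs a4
      rw [hs]
      linarith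

end Sys

namespace Sys

variable {a : ℕ → ℤ} {e t u f g : ℕ → ℝ}

theorem step {K A A1 B B1 u u1 t t1 c s s' : ℝ} (u1p : 0 < u1) (tp : 0 < t)
    (hA : A1 = u1 * A) (hB : B = t * B1) (hu : u1 * (c + s * u) = 1)
    (ht : t * (c + s' * t1) = 1) (h : K * (1 + s' * t1 * u1) ≤ A1 * B1) :
    K * (1 + s * t * u) ≤ A * B := by
  have k1 : t * (1 + s' * t1 * u1) = u1 * (1 + s * t * u) := by
    linear_combination u1 * ht - t * hu
  have k2 := mul_le_mul_of_nonneg_left h tp.le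
  refine le_of_mul_le_mul_left (a := u1) ?_ u1p
  calc u1 * (K * (1 + s * t * u)) = K * (u1 * (1 + s * t * u)) := by ring
    _ = t * (K * (1 + s' * t1 * u1)) := by rw [← k1]; ring
    _ ≤ t * (A1 * B1) := k2
    _ = u1 * (A * B) := by rw [hA, hB]; ring

theorem V3 (S : Sys a e t u f g) {r b K : ℝ} (C : Cst r b K) (n : ℕ) :
    K * (1 + e (n+1) * t n * u n) ≤ (1 - u n - f n) * (1 + e (n+1) * t n + g n) := by
  by_cases H : e (n+1) = 1 ∨ 3 ≤ a (n+1)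
  · exact S.V3main C n H
  push Not at H
  have he := S.he_ne _ H.1
  have h2 : a (n+1) = 2 := by have := S.ha n; omega
  have he' := S.hc1r n h2 he
  have h := S.V3main C (n+1) (Or.inl he')
  have hu := S.hu n
  have ht := S.ht n
  have hf := S.feven n (not_odd2 h2)
  have hg := S.geven n (not_odd2 h2)
  refine step (S.upos n) (S.t0 n) ?_ ?_ hu ht h
  · rw [hf]; rw [h2] at hu; rw [he] at hu ⊢; push_cast at hu; linear_combination -hu
  · rw [hg]; rw [h2] at ht; rw [he] at ⊢; push_cast at ht; linear_combination -ht

theorem V4 (S : Sys a e t u f g) {r b K : ℝ} (C : Cst r b K) (n : ℕ) :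
    K * (1 + e (n+1) * t n * u n) ≤ (1 - u n + f n) * (1 + e (n+1) * t n - g n) := by
  have pos : ∀ n, e (n+1) = 1 →
      K * (1 + e (n+1) * t n * u n) ≤ (1 - u n + f n) * (1 + e (n+1) * t n - g n) := by
    intro n he
    rw [he]
    have t0 := S.t0 n
    have u0 := S.u0 n
    have u58 := S.u58 n
    have t23 := S.t23 n
    have gt := S.gt n
    have f1 := (S.finv n).1
    have tu : t n * u n ≤ 2/3 * (5/8) := mul_le_mul t23.le u58 u0 (by norm_num)
    have k1 : K * (1 + 1 * t n * u n) ≤ 0.159 * (1 + 1 * t n * u n) :=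
      mul_le_mul_of_nonneg_right C.K1 (by linarith [mul_nonneg t0.le u0])
    have k2 : 1/4 * 1 ≤ (1 - u n + f n) * (1 + 1 * t n - g n) :=
      mul_le_mul (by linarith) (by linarith) (by norm_num) (by linarith)
    linarith
  by_cases H : e (n+1) = 1
  · exact pos n H
  have he := S.he_ne _ H
  have hu := S.hu n
  have ht := S.ht n
  by_cases h2 : a (n+1) = 2
  · have he' := S.hc1r n h2 he
    have h := pos (n+1) he'
    have hf := S.feven n (not_odd2 h2)
    have hg := S.geven n (not_odd2 h2)
    refine step (S.upos n) (S.t0 n) ?_ ?_ hu ht h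
    · rw [hf]; rw [h2] at hu; rw [he] at hu ⊢; push_cast at hu; linear_combination -hu
    · rw [hg]; rw [h2] at ht; rw [he] at ⊢; push_cast at ht; linear_combination -ht
  by_cases h3 : a (n+1) = 3
  · have h := S.V3 C (n+1)
    have hf := S.fodd n (odd3 h3)
    have hg := S.godd n (odd3 h3)
    refine step (S.upos n) (S.t0 n) ?_ ?_ hu ht h
    · rw [hf]; rw [h3] at hu; rw [he] at hu ⊢; push_cast at hu; linear_combination -hu
    · rw [hg]; rw [h3] at ht; rw [he] at ⊢; push_cast at ht; linear_combination -ht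
  · have h4 : 4 ≤ a (n+1) := by have := S.ha n; omega
    have t27 := S.t27 n h4
    have u12 := S.u12 n he
    rw [he]
    have t0 := S.t0 n
    have u0 := S.u0 n
    have gt := S.gt n
    have f1 := (S.finv n).1
    have tu : t n * u n ≤ 2/7 * (1/2) := mul_le_mul t27.le u12 u0 (by norm_num)
    have k1 : K * (1 + -1 * t n * u n) ≤ 0.159 * (1 + -1 * t n * u n) :=
      mul_le_mul_of_nonneg_right C.K1 (by linarith [mul_nonneg t0.le u0])
    have k2 : 2/3 * (1 - u n) * (1 - 2 * t n) ≤ (1 - u n + f n) * (1 + -1 * t n - g n) :=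
      mul_le_mul (by linarith) (by linarith) (by linarith) (by linarith)
    have k3 : 0 ≤ (1/2 - u n) * (2/7 - t n) := mul_nonneg (by linarith) (by linarith)
    nlinarith

theorem V2 (S : Sys a e t u f g) {r b K : ℝ} (C : Cst r b K) (n : ℕ) :
    K * (1 + e (n+1) * t n * u n) ≤ (1 + u n - f n) * (1 - e (n+1) * t n - g n) := by
  have t0 := S.t0 n
  have u0 := S.u0 n
  have u58 := S.u58 n
  have t23 := S.t23 n
  have gt := S.gt n
  have f1 := (S.finv n).2.1
  have hu := S.hu n
  have ht := S.ht n
  have tu : t n * u n ≤ 2/3 * (5/8) := mul_le_mul t23.le u58 u0 (by norm_num)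
  have tu0 := mul_nonneg t0.le u0
  rcases S.he (n+1) with he | he
  swap
  · rw [he]
    have k1 : K * (1 + -1 * t n * u n) ≤ 0.159 * (1 + -1 * t n * u n) :=
      mul_le_mul_of_nonneg_right C.K1 (by linarith)
    have k2 : 2/3 * 1 ≤ (1 + u n - f n) * (1 - -1 * t n - g n) :=
      mul_le_mul (by linarith) (by linarith) (by norm_num) (by linarith)
    linarith
  by_cases h2 : a (n+1) = 2
  · have h := S.V4 C (n+1)
    have hf := S.feven n (not_odd2 h2)
    have hg := S.geven n (not_odd2 h2)
    refine step (S.upos n) (S.t0 n) ?_ ?_ hu ht h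
    · rw [hf]; rw [h2] at hu; rw [he] at hu ⊢; push_cast at hu; linear_combination -hu
    · rw [hg]; rw [h2] at ht; rw [he] at ⊢; push_cast at ht; linear_combination -ht
  by_cases h3 : a (n+1) = 3
  · have h := S.V3 C (n+1)
    have hf := S.fodd n (odd3 h3)
    have hg := S.godd n (odd3 h3)
    refine step (S.upos n) (S.t0 n) ?_ ?_ hu ht h
    · rw [hf]; rw [h3] at hu; rw [he] at hu ⊢; push_cast at hu; linear_combination -hu
    · rw [hg]; rw [h3] at ht; rw [he] at ⊢; push_cast at ht; linear_combination -ht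
  have h4 : 4 ≤ a (n+1) := by have := S.ha n; omega
  have t27 := S.t27 n h4
  rw [he]
  have k1 : K * (1 + 1 * t n * u n) ≤ 0.159 * (1 + 1 * t n * u n) :=
    mul_le_mul_of_nonneg_right C.K1 (by linarith)
  have k2 : 2/3 * (3/7) ≤ (1 + u n - f n) * (1 - 1 * t n - g n) :=
    mul_le_mul (by linarith) (by linarith) (by norm_num) (by linarith)
  linarith

theorem V1 (S : Sys a e t u f g) {r b K : ℝ} (C : Cst r b K) (n : ℕ) :
    K * (1 + e (n+1) * t n * u n) ≤ (1 + u n + f n) * (1 - e (n+1) * t n + g n) := by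
  have t0 := S.t0 n
  have u0 := S.u0 n
  have u58 := S.u58 n
  have t23 := S.t23 n
  have g0 := S.g0 n
  have f1 := (S.finv n).1
  have hu := S.hu n
  have ht := S.ht n
  have tu : t n * u n ≤ 2/3 * (5/8) := mul_le_mul t23.le u58 u0 (by norm_num)
  have tu0 := mul_nonneg t0.le u0
  rcases S.he (n+1) with he | he
  swap
  · rw [he]
    have k1 : K * (1 + -1 * t n * u n) ≤ 0.159 * (1 + -1 * t n * u n) :=
      mul_le_mul_of_nonneg_right C.K1 (by linarith)
    have k2 : 2/3 * 1 ≤ (1 + u n + f n) * (1 - -1 * t n + g n) :=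
      mul_le_mul (by linarith) (by linarith) (by norm_num) (by linarith)
    linarith
  by_cases h2 : a (n+1) = 2
  · have h := S.V3 C (n+1)
    have hf := S.feven n (not_odd2 h2)
    have hg := S.geven n (not_odd2 h2)
    refine step (S.upos n) (S.t0 n) ?_ ?_ hu ht h
    · rw [hf]; rw [h2] at hu; rw [he] at hu ⊢; push_cast at hu; linear_combination -hu
    · rw [hg]; rw [h2] at ht; rw [he] at ⊢; push_cast at ht; linear_combination -ht
  have t25 := S.t25 n (S.ge3 n h2)
  rw [he]
  have k1 : K * (1 + 1 * t n * u n) ≤ 0.159 * (1 + 1 * t n * u n) :=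
    mul_le_mul_of_nonneg_right C.K1 (by linarith)
  have k2 : 2/3 * (3/5) ≤ (1 + u n + f n) * (1 - 1 * t n + g n) :=
    mul_le_mul (by linarith) (by linarith) (by norm_num) (by linarith)
  linarith

end Sys

namespace Sys

variable {a : ℕ → ℤ} {e t u f g : ℕ → ℝ}

theorem stepE (S : Sys a e t u f g) {K x y : ℝ} (n : ℕ) (h : ¬ Odd (a (n+1)))
    (hK : K * (1 + e (n+2) * t (n+1) * u (n+1)) ≤
      |(-x) + (a (n+1) * x - e (n+1) * y) * u (n+1) + f (n+1)| *
      |(a (n+1) * x - e (n+1) * y) - e (n+2) * t (n+1) * (-x) + g (n+1)|) :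
    K * (1 + e (n+1) * t n * u n) ≤ |y + x * u n + f n| * |x - e (n+1) * t n * y + g n| := by
  have hu := S.hu n
  have ht := S.ht n
  refine step (S.upos n) (S.t0 n) ?_ ?_ hu ht hK
  · rw [← abs_of_pos (S.upos n), ← abs_mul, abs_of_pos (S.upos n), S.feven n h]
    rcases S.he (n+1) with he | he
    · rw [← abs_neg]; congr 1; rw [he] at hu ⊢; linear_combination -x * hu
    · congr 1; rw [he] at hu ⊢; linear_combination x * hu
  · rw [← abs_of_pos (S.t0 n), ← abs_mul, abs_of_pos (S.t0 n), S.geven n h]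
    congr 1; linear_combination -x * ht

theorem stepO (S : Sys a e t u f g) {K x y : ℝ} (n : ℕ) (h : Odd (a (n+1)))
    (hK : K * (1 + e (n+2) * t (n+1) * u (n+1)) ≤
      |x + (-(a (n+1) * x - e (n+1) * y) - 1) * u (n+1) + f (n+1)| *
      |(-(a (n+1) * x - e (n+1) * y) - 1) - e (n+2) * t (n+1) * x + g (n+1)|) :
    K * (1 + e (n+1) * t n * u n) ≤ |y + x * u n + f n| * |x - e (n+1) * t n * y + g n| := by
  have hu := S.hu n
  have ht := S.ht n
  refine step (S.upos n) (S.t0 n) ?_ ?_ hu ht hK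
  · rw [← abs_of_pos (S.upos n), ← abs_mul, abs_of_pos (S.upos n), S.fodd n h]
    rcases S.he (n+1) with he | he
    · congr 1; rw [he] at hu ⊢; linear_combination -x * hu
    · rw [← abs_neg]; congr 1; rw [he] at hu ⊢; linear_combination x * hu
  · rw [← abs_of_pos (S.t0 n), ← abs_mul, abs_of_pos (S.t0 n), S.godd n h, ← abs_neg]
    congr 1; linear_combination x * ht

theorem cell (S : Sys a e t u f g) {r b K : ℝ} (C : Cst r b K) (n : ℕ) {x y : ℝ}
    (hx : x = 1 ∨ x = -1) (hy : y = 1 ∨ y = -1) :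
    K * (1 + e (n+1) * t n * u n) ≤ |y + x * u n + f n| * |x - e (n+1) * t n * y + g n| := by
  rw [← abs_mul]
  rcases hx with rfl | rfl <;> rcases hy with rfl | rfl
  · exact (S.V1 C n).trans ((le_abs_self _).trans_eq (congrArg _ (by ring)))
  · exact (S.V3 C n).trans ((neg_le_abs _).trans_eq' (by ring))
  · exact (S.V4 C n).trans ((neg_le_abs _).trans_eq' (by ring))
  · exact (S.V2 C n).trans ((le_abs_self _).trans_eq (congrArg _ (by ring)))

theorem line_core {M c b t : ℝ} {y1 η : ℤ} (hc : |c| ≤ 1) (t0 : 0 < t) (hη : Odd η)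
    (ho : Odd y1) (h1 : 1 ≤ y1) (hb1 : y1 * t ≤ b) (hb2 : b ≤ (y1 + 2) * t)
    (k1 : M ≤ |1 + c| * |b - t * 1|) (k2 : M ≤ |-1 + c| * |b - t * (-1)|)
    (k3 : M ≤ |y1 + c| * |b - t * y1|) (k4 : M ≤ |y1 + 2 + c| * |b - t * (y1 + 2)|) :
    M ≤ |η + c| * |b - t * η| := by
  obtain ⟨c0, c1⟩ := abs_le.1 hc
  have h1R : (1:ℝ) ≤ y1 := by exact_mod_cast h1
  have b0 : t ≤ b := by nlinarith
  have tri : η ≤ -1 ∨ (1 ≤ η ∧ η ≤ y1) ∨ y1 + 2 ≤ η := by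
    obtain ⟨p, rfl⟩ := hη
    obtain ⟨q, rfl⟩ := ho
    omega
  rcases tri with h | ⟨h, h'⟩ | h
  · have hR : (η:ℝ) ≤ -1 := by exact_mod_cast h
    refine k2.trans (mul_le_mul ?_ ?_ (abs_nonneg _) (abs_nonneg _))
    · rw [abs_of_nonpos (by linarith), abs_of_nonpos (by linarith)]; linarith
    · rw [abs_of_nonneg (by linarith), abs_of_nonneg (by nlinarith)]; nlinarith
  · have hR : (1:ℝ) ≤ η := by exact_mod_cast h
    have hR' : (η:ℝ) ≤ y1 := by exact_mod_cast h'
    have m1 : t * (η:ℝ) ≤ t * y1 := mul_le_mul_of_nonneg_left hR' t0.le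
    rw [abs_of_nonneg (by linarith), abs_of_nonneg (by linarith)] at k1 k3 ⊢
    rcases hR.eq_or_lt with h2 | h2
    · rw [← h2]; exact k1
    · have id : (y1 - η) * ((1 + c) * (b - t * 1)) + (η - 1) * ((y1 + c) * (b - t * y1))
          - (y1 - 1) * ((η + c) * (b - t * η)) = -(t * ((η - 1) * (y1 - η) * (y1 - 1))) := by
        ring
      have pos : 0 ≤ t * (((η:ℝ) - 1) * (y1 - η) * (y1 - 1)) := by
        apply mul_nonneg t0.le (mul_nonneg (mul_nonneg _ _) _) <;> linarith
      have l1 := mul_le_mul_of_nonneg_left k1 (by linarith : 0 ≤ (y1:ℝ) - η)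
      have l2 := mul_le_mul_of_nonneg_left k3 (by linarith : 0 ≤ (η:ℝ) - 1)
      refine le_of_mul_le_mul_left (a := (y1:ℝ) - 1) ?_ (by linarith)
      linarith
  · have hR : (y1:ℝ) + 2 ≤ η := by exact_mod_cast h
    have m1 : t * ((y1:ℝ) + 2) ≤ t * η := mul_le_mul_of_nonneg_left hR t0.le
    refine k4.trans (mul_le_mul ?_ ?_ (abs_nonneg _) (abs_nonneg _))
    · rw [abs_of_nonneg (by linarith), abs_of_nonneg (by linarith)]; linarith
    · rw [abs_of_nonpos (by linarith), abs_of_nonpos (by linarith)]; linarith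

/-- integer sign -/
theorem isgn (S : Sys a e t u f g) (n : ℕ) : ∃ s : ℤ, (s = 1 ∨ s = -1) ∧ e n = s := by
  rcases S.he n with h | h
  · exact ⟨1, Or.inl rfl, by rw [h]; norm_num⟩
  · exact ⟨-1, Or.inr rfl, by rw [h]; norm_num⟩

set_option maxHeartbeats 1000000 in
theorem line (S : Sys a e t u f g) {r b K : ℝ} (C : Cst r b K) (n : ℕ) {x y : ℤ}
    (hx : x = 1 ∨ x = -1) (hy : Odd y) :
    K * (1 + e (n+1) * t n * u n) ≤ |y + x * u n + f n| * |x - e (n+1) * t n * y + g n| := by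
  obtain ⟨s, hs, hes⟩ := S.isgn (n+1)
  obtain ⟨i1, i2, i3, i4⟩ := S.finv n
  have u0 := S.u0 n
  have t0 := S.t0 n
  have ha := S.ha n
  have ht := S.ht n
  have g0 := S.g0 (n+1)
  have gt := S.gt (n+1)
  have tg := S.tg1 (n+1)
  have ss : s * s = 1 := by rcases hs with rfl | rfl <;> norm_num
  have ssR : (s:ℝ) * s = 1 := by exact_mod_cast ss
  have xx : x * x = 1 := by rcases hx with rfl | rfl <;> norm_num
  have xxR : (x:ℝ) * x = 1 := by exact_mod_cast xx
  have sabs : |(s:ℝ)| = 1 := by rcases hs with rfl | rfl <;> norm_num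
  have xabs : |(x:ℝ)| = 1 := by rcases hx with rfl | rfl <;> norm_num
  have xR : (x:ℝ) = 1 ∨ (x:ℝ) = -1 := by rcases hx with rfl | rfl <;> norm_num
  have sR : (s:ℝ) = 1 ∨ (s:ℝ) = -1 := by rcases hs with rfl | rfl <;> norm_num
  -- translation between `η = x s y` and `y`
  have trA : ∀ z : ℝ, |z + s * (u n + x * f n)| = |s * x * z + x * u n + f n| := by
    intro z
    have : z + s * (u n + x * f n) = s * x * (s * x * z + x * u n + f n) := by
      linear_combination (-(z * x * x)) * ssR + (-z - s * u n) * xxR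
    rw [this, abs_mul, abs_mul, sabs, xabs]; ring
  have trB : ∀ z : ℝ, |1 + x * g n - t n * z| = |x - s * t n * (s * x * z) + g n| := by
    intro z
    have : 1 + x * g n - t n * z = x * (x - s * t n * (s * x * z) + g n) := by
      linear_combination (t n * z * x * x) * ssR + (-1 + t n * z) * xxR
    rw [this, abs_mul, xabs]; ring
  have trAB : ∀ z : ℝ, K * (1 + e (n+1) * t n * u n) ≤
      |s * x * z + x * u n + f n| * |x - e (n+1) * t n * (s * x * z) + g n| →
      K * (1 + e (n+1) * t n * u n) ≤ |z + s * (u n + x * f n)| * |1 + x * g n - t n * z| := by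
    intro z hz
    rw [trA, trB]; rw [hes] at hz ⊢; exact hz
  have c1 : |s * (u n + x * f n)| ≤ 1 := by
    rw [abs_mul, sabs, one_mul, abs_le]
    rcases xR with h | h <;> rw [h] <;> constructor <;> linarith
  have sx : ∀ z : ℝ, (z = 1 ∨ z = -1) → (s * x * z = 1 ∨ s * x * z = -1) := by
    intro z hz
    rcases hz with h | h <;> rcases xR with h' | h' <;> rcases sR with h'' | h'' <;>
      rw [h, h', h''] <;> norm_num
  have k1 := trAB 1 (S.cell C n xR (sx 1 (Or.inl rfl)))
  have k2 := trAB (-1) (S.cell C n xR (sx (-1) (Or.inr rfl)))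
  have hη : Odd (s * x * y) := by
    rcases hs with rfl | rfl <;> rcases hx with rfl | rfl <;> simpa using hy
  have fin : ∀ y1 : ℤ, Odd y1 → 1 ≤ y1 → y1 * t n ≤ 1 + x * g n → 1 + x * g n ≤ (y1 + 2) * t n →
      K * (1 + e (n+1) * t n * u n) ≤
        |s * x * (y1:ℝ) + x * u n + f n| * |x - e (n+1) * t n * (s * x * (y1:ℝ)) + g n| →
      K * (1 + e (n+1) * t n * u n) ≤
        |s * x * ((y1:ℝ)+2) + x * u n + f n| * |x - e (n+1) * t n * (s * x * ((y1:ℝ)+2)) + g n| →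
      K * (1 + e (n+1) * t n * u n) ≤ |y + x * u n + f n| * |x - e (n+1) * t n * y + g n| := by
    intro y1 ho h1 hb1 hb2 k3 k4
    have := line_core c1 t0 hη ho h1 hb1 hb2 k1 k2 (trAB _ k3) (trAB _ k4)
    rw [trA, trB] at this
    have ey : (s:ℝ) * x * ((s * x * y : ℤ) : ℝ) = y := by
      push_cast
      linear_combination (x * x * y : ℝ) * ssR + (y:ℝ) * xxR
    rw [ey] at this
    rw [hes] at this ⊢
    exact this
  by_cases ho : Odd (a (n+1))
  · have a3 : 3 ≤ a (n+1) := by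
      have : a (n+1) ≠ 2 := fun h => not_odd2 h ho
      omega
    have hg := S.godd n ho
    -- y1 = a - 1 + x
    refine fin (a (n+1) - 1 + x) ?_ ?_ ?_ ?_ ?_ ?_
    · obtain ⟨q, hq⟩ := ho
      rcases hx with rfl | rfl
      · exact ⟨q, by omega⟩
      · exact ⟨q - 1, by omega⟩
    · rcases hx with rfl | rfl <;> omega
    · push_cast; rw [hg]
      have : 0 ≤ t n * (e (n+2) * t (n+1) + 1 - x * g (n+1)) := by
        apply mul_nonneg t0.le
        rcases xR with h | h <;> rcases S.he (n+2) with h' | h' <;> rw [h, h'] <;> linarith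
      linarith
    · push_cast; rw [hg]
      have : 0 ≤ t n * (1 - e (n+2) * t (n+1) + x * g (n+1)) := by
        apply mul_nonneg t0.le
        rcases xR with h | h <;> rcases S.he (n+2) with h' | h' <;> rw [h, h'] <;> linarith
      linarith
    · apply S.stepO n ho
      have q : (-((a (n+1):ℝ) * x - e (n+1) * (s * x * ((a (n+1) - 1 + x : ℤ):ℝ))) - 1) = -x := by
        rw [hes]; push_cast
        linear_combination ((x:ℝ) * (a (n+1) - 1 + x)) * ssR + xxR
      rw [q]
      exact S.cell C (n+1) (by rcases xR with h | h <;> rw [h] <;> norm_num) xR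
    · apply S.stepO n ho
      have q : (-((a (n+1):ℝ) * x - e (n+1) * (s * x * (((a (n+1) - 1 + x : ℤ):ℝ)+2))) - 1)
          = x := by
        rw [hes]; push_cast
        linear_combination ((x:ℝ) * (a (n+1) - 1 + x + 2)) * ssR + xxR
      rw [q]
      exact S.cell C (n+1) xR xR
  · have hg := S.geven n ho
    have nx : (-x:ℝ) = 1 ∨ (-x:ℝ) = -1 := by rcases xR with h | h <;> rw [h] <;> norm_num
    refine fin (a (n+1) - 1) ?_ ?_ ?_ ?_ ?_ ?_
    · rw [Int.not_odd_iff_even] at ho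
      obtain ⟨q, hq⟩ := ho
      exact ⟨q - 1, by omega⟩
    · omega
    · push_cast; rw [hg]
      have : 0 ≤ t n * (e (n+2) * t (n+1) + 1 + x * g (n+1)) := by
        apply mul_nonneg t0.le
        rcases xR with h | h <;> rcases S.he (n+2) with h' | h' <;> rw [h, h'] <;> linarith
      linarith
    · push_cast; rw [hg]
      have : 0 ≤ t n * (1 - e (n+2) * t (n+1) - x * g (n+1)) := by
        apply mul_nonneg t0.le
        rcases xR with h | h <;> rcases S.he (n+2) with h' | h' <;> rw [h, h'] <;> linarith
      linarith
    · apply S.stepE n ho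
      have q : ((a (n+1):ℝ) * x - e (n+1) * (s * x * ((a (n+1) - 1 : ℤ):ℝ))) = x := by
        rw [hes]; push_cast
        linear_combination (-(x:ℝ) * (a (n+1) - 1)) * ssR
      rw [q]
      exact S.cell C (n+1) xR nx
    · apply S.stepE n ho
      have q : ((a (n+1):ℝ) * x - e (n+1) * (s * x * (((a (n+1) - 1 : ℤ):ℝ)+2))) = -x := by
        rw [hes]; push_cast
        linear_combination (-(x:ℝ) * (a (n+1) + 1)) * ssR
      rw [q]
      exact S.cell C (n+1) nx nx

end Sys

/-- Orbits of the digit map on pairs of odd integers. -/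
structure Orb (a : ℕ → ℤ) (e : ℕ → ℝ) (x y : ℕ → ℤ) : Prop where
  ox : ∀ n, Odd (x n)
  oy : ∀ n, Odd (y n)
  xo : ∀ n, Odd (a (n+1)) → (x (n+1) : ℝ) = -(a (n+1) * x n - e (n+1) * y n) - 1
  yo : ∀ n, Odd (a (n+1)) → y (n+1) = x n
  xe : ∀ n, ¬ Odd (a (n+1)) → (x (n+1) : ℝ) = a (n+1) * x n - e (n+1) * y n
  ye : ∀ n, ¬ Odd (a (n+1)) → y (n+1) = -x n

namespace Sys

variable {a : ℕ → ℤ} {e t u f g : ℕ → ℝ}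

theorem orb_step (S : Sys a e t u f g) {x y : ℕ → ℤ} (O : Orb a e x y) {K : ℝ} (n : ℕ)
    (h : K * (1 + e (n+2) * t (n+1) * u (n+1)) ≤
      |y (n+1) + x (n+1) * u (n+1) + f (n+1)| *
      |x (n+1) - e (n+2) * t (n+1) * y (n+1) + g (n+1)|) :
    K * (1 + e (n+1) * t n * u n) ≤
      |y n + x n * u n + f n| * |x n - e (n+1) * t n * y n + g n| := by
  by_cases ho : Odd (a (n+1))
  · apply S.stepO n ho
    rw [O.xo n ho, O.yo n ho] at h
    exact h
  · apply S.stepE n ho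
    rw [O.xe n ho, O.ye n ho] at h
    push_cast at h
    exact h

theorem orb_down (S : Sys a e t u f g) {x y : ℕ → ℤ} (O : Orb a e x y) {K : ℝ} (n : ℕ)
    (h : K * (1 + e (n+1) * t n * u n) ≤
      |y n + x n * u n + f n| * |x n - e (n+1) * t n * y n + g n|) :
    K ≤ |(y 0 : ℝ)| * |x 0 - t 0 * y 0 + g 0| := by
  induction n with
  | zero => rw [S.u00, S.f00] at h; simpa [S.he1] using h
  | succ n ih => exact ih (S.orb_step O n h)

/-- `|B_n| = t_n |B_{n+1}|` and `|A_{n+1}| = u_{n+1} |A_n|`. -/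
theorem orb_B (S : Sys a e t u f g) {x y : ℕ → ℤ} (O : Orb a e x y) (n : ℕ) :
    |x n - e (n+1) * t n * y n + g n| =
      t n * |x (n+1) - e (n+2) * t (n+1) * y (n+1) + g (n+1)| := by
  have ht := S.ht n
  rw [← abs_of_pos (S.t0 n), ← abs_mul, abs_of_pos (S.t0 n)]
  by_cases ho : Odd (a (n+1))
  · rw [O.xo n ho, O.yo n ho, S.godd n ho, ← abs_neg]
    congr 1; linear_combination (x n : ℝ) * ht
  · rw [O.xe n ho, O.ye n ho, S.geven n ho]
    congr 1; push_cast; linear_combination -(x n : ℝ) * ht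

theorem orb_A (S : Sys a e t u f g) {x y : ℕ → ℤ} (O : Orb a e x y) (n : ℕ) :
    |y (n+1) + x (n+1) * u (n+1) + f (n+1)| = u (n+1) * |y n + x n * u n + f n| := by
  have hu := S.hu n
  rw [← abs_of_pos (S.upos n), ← abs_mul, abs_of_pos (S.upos n)]
  by_cases ho : Odd (a (n+1))
  · rw [O.xo n ho, O.yo n ho, S.fodd n ho]
    rcases S.he (n+1) with he | he
    · congr 1; rw [he] at hu ⊢; linear_combination -(x n : ℝ) * hu
    · rw [← abs_neg]; congr 1; rw [he] at hu ⊢; linear_combination (x n : ℝ) * hu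
  · rw [O.xe n ho, O.ye n ho, S.feven n ho]
    rcases S.he (n+1) with he | he
    · rw [← abs_neg]; congr 1; rw [he] at hu ⊢; push_cast; linear_combination -(x n : ℝ) * hu
    · congr 1; rw [he] at hu ⊢; push_cast; linear_combination (x n : ℝ) * hu

theorem local_min (S : Sys a e t u f g) {r b K : ℝ} (C : Cst r b K) {x y : ℕ → ℤ}
    (O : Orb a e x y) (n : ℕ) (h1 : |x n| < |y n|) (h2 : |x n| ≤ |x (n+1)|) :
    K * (1 + e (n+1) * t n * u n) ≤
      |y n + x n * u n + f n| * |x n - e (n+1) * t n * y n + g n| := by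
  by_cases hx : x n = 1 ∨ x n = -1
  · exact S.line C n hx (O.oy n)
  push Not at hx
  have ox := O.ox n
  have oy := O.oy n
  have x3 : 3 ≤ |x n| := by
    obtain ⟨p, hp⟩ := ox
    rcases abs_cases (x n) with h | h <;> omega
  have y2 : |x n| + 2 ≤ |y n| := by
    obtain ⟨p, hp⟩ := ox
    obtain ⟨q, hq⟩ := oy
    rcases abs_cases (x n) with h | h <;> rcases abs_cases (y n) with h' | h' <;> omega
  have x3R : (3:ℝ) ≤ |(x n : ℝ)| := by exact_mod_cast x3
  have y2R : |(x n : ℝ)| + 2 ≤ |(y n : ℝ)| := by exact_mod_cast y2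
  have h2R : |(x n : ℝ)| ≤ |(x (n+1) : ℝ)| := by exact_mod_cast h2
  have eabs : |e (n+1)| = 1 := by rcases S.he (n+1) with h | h <;> rw [h] <;> norm_num
  have eabs' : |e (n+2)| = 1 := by rcases S.he (n+2) with h | h <;> rw [h] <;> norm_num
  have aR := S.haR n
  have u0 := S.u0 n
  have u58 := S.u58 n
  have t0 := S.t0 n
  have t23 := S.t23 n
  obtain ⟨i1, i2, i3, i4⟩ := S.finv n
  have fa : |f n| ≤ 1 - u n := abs_le.2 ⟨by linarith, i3⟩
  -- the A factor
  have A : 0.375 * |(y n : ℝ)| + 0.875 ≤ |y n + x n * u n + f n| := by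
    have k1 : |(y n : ℝ)| ≤ |y n + x n * u n + f n| + |(x n : ℝ)| * u n + |f n| := by
      have e1 : (y n : ℝ) = (y n + x n * u n + f n) + (-(x n * u n)) + (-f n) := by ring
      calc |(y n : ℝ)| = |(y n + x n * u n + f n) + (-(x n * u n)) + (-f n)| := by rw [← e1]
        _ ≤ |y n + x n * u n + f n| + |-(x n * u n : ℝ)| + |-f n| := abs_add_three _ _ _
        _ = _ := by rw [abs_neg, abs_neg, abs_mul, abs_of_nonneg u0]
    have k2 : 0 ≤ (5/8 - u n) * (|(x n : ℝ)| - 1) := mul_nonneg (by linarith) (by linarith)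
    nlinarith
  -- the B factor
  have ya : |(y (n+1) : ℝ)| = |(x n : ℝ)| := by
    by_cases ho : Odd (a (n+1))
    · rw [O.yo n ho]
    · rw [O.ye n ho]; push_cast; rw [abs_neg]
  have B : (|(x (n+1) : ℝ)| - 2) / 3 ≤ |x (n+1) - e (n+2) * t (n+1) * y (n+1) + g (n+1)| := by
    have t0' := S.t0 (n+1)
    have t23' := S.t23 (n+1)
    have g0' := S.g0 (n+1)
    have gt' := S.gt (n+1)
    have k1 : |(x (n+1) : ℝ)| ≤ |x (n+1) - e (n+2) * t (n+1) * y (n+1) + g (n+1)|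
        + t (n+1) * |(x n : ℝ)| + g (n+1) := by
      have e1 : (x (n+1) : ℝ) = (x (n+1) - e (n+2) * t (n+1) * y (n+1) + g (n+1))
        + (e (n+2) * t (n+1) * y (n+1)) + (-g (n+1)) := by ring
      calc |(x (n+1) : ℝ)| = |(x (n+1) - e (n+2) * t (n+1) * y (n+1) + g (n+1))
        + (e (n+2) * t (n+1) * y (n+1)) + (-g (n+1))| := by rw [← e1]
        _ ≤ |x (n+1) - e (n+2) * t (n+1) * y (n+1) + g (n+1)|
          + |e (n+2) * t (n+1) * y (n+1)| + |-g (n+1)| := abs_add_three _ _ _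
        _ = _ := by
          rw [abs_neg, abs_mul, abs_mul, abs_of_nonneg g0', abs_of_pos t0', eabs', ya, one_mul]
    have k2 : t (n+1) * |(x n : ℝ)| ≤ 2/3 * |(x n : ℝ)| :=
      mul_le_mul_of_nonneg_right t23'.le (by linarith)
    linarith
  -- sum
  have sum : (a (n+1) : ℝ) * |(x n : ℝ)| - 1 ≤ |(y n : ℝ)| + |(x (n+1) : ℝ)| := by
    have ap : |(a (n+1) : ℝ)| = a (n+1) := abs_of_nonneg (by linarith)
    by_cases ho : Odd (a (n+1))
    · have e1 : (a (n+1) : ℝ) * x n = -(x (n+1)) + e (n+1) * y n + -1 := by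
        rw [O.xo n ho]; ring
      have := abs_add_three (-(x (n+1) : ℝ)) (e (n+1) * y n) (-1)
      rw [← e1, abs_mul, abs_mul, ap, eabs, abs_neg, abs_neg, abs_one] at this
      linarith
    · have e1 : (a (n+1) : ℝ) * x n = x (n+1) + e (n+1) * y n := by
        rw [O.xe n ho]; ring
      have := abs_add_le (x (n+1) : ℝ) (e (n+1) * y n)
      rw [← e1, abs_mul, abs_mul, ap, eabs] at this
      linarith
  have sum3 : 3 * (a (n+1) : ℝ) - 1 ≤ |(y n : ℝ)| + |(x (n+1) : ℝ)| := by nlinarith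
  rw [S.orb_B O n]
  generalize |y n + x n * u n + f n| = AA at *
  generalize |x (n+1) - e (n+2) * t (n+1) * y (n+1) + g (n+1)| = BB at *
  generalize |(y n : ℝ)| = p at *
  generalize |(x (n+1) : ℝ)| = q at *
  generalize |(x n : ℝ)| = xx at *
  have AB : (0.375 * p + 0.875) * ((q - 2)/3) ≤ AA * BB :=
    mul_le_mul A B (by linarith) (by linarith)
  have pq : 0 ≤ (p - 5) * (q - 3) := mul_nonneg (by linarith) (by linarith)
  have AB1 : 0.9 ≤ AA * BB := by nlinarith
  have AB2 : 0.375 * (a (n+1) : ℝ) - 0.21 ≤ AA * BB := by nlinarith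
  have AB3 : 0.226 * ((a (n+1) : ℝ) + 2/3) ≤ AA * BB := by
    rcases le_total (a (n+1) : ℝ) 3 with h | h <;> linarith
  have ht := S.ht n
  have tl : 1 ≤ t n * ((a (n+1) : ℝ) + 2/3) := by
    have := S.t23 (n+1)
    have := S.t0 (n+1)
    rw [← ht]
    apply mul_le_mul_of_nonneg_left _ t0.le
    rcases S.he (n+2) with h | h <;> rw [h] <;> linarith
  have fin := mul_le_mul_of_nonneg_left AB3 t0.le
  have tu : t n * u n ≤ 2/3 * (5/8) := mul_le_mul t23.le u58 u0 (by norm_num)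
  have tu0 := mul_nonneg t0.le u0
  have k1 : K * (1 + e (n+1) * t n * u n) ≤ 0.159 * (1 + e (n+1) * t n * u n) := by
    apply mul_le_mul_of_nonneg_right C.K1
    rcases S.he (n+1) with h | h <;> rw [h] <;> linarith
  have k2 : 0.159 * (1 + e (n+1) * t n * u n) ≤ 0.226 := by
    rcases S.he (n+1) with h | h <;> rw [h] <;> linarith
  linarith

theorem lower (S : Sys a e t u f g) {r b K : ℝ} (C : Cst r b K) {x y : ℕ → ℤ}
    (O : Orb a e x y) (h0 : |x 0| < |y 0|) :
    K ≤ |(y 0 : ℝ)| * |x 0 - t 0 * y 0 + g 0| := by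
  have ex : ∃ n, |x n| ≤ |x (n+1)| := by
    by_contra hh
    push Not at hh
    have : ∀ n, |x n| + n ≤ |x 0| := by
      intro n
      induction n with
      | zero => simp
      | succ n ih => have := hh n; push_cast; omega
    have h := this ((|x 0|).toNat + 1)
    have := abs_nonneg (x ((|x 0|).toNat + 1))
    have := abs_nonneg (x 0)
    push_cast at h
    omega
  classical
  have hn := Nat.find_spec ex
  have hm := fun m => Nat.find_min ex (m := m)
  generalize Nat.find ex = n at *
  apply S.orb_down O n
  refine S.local_min C O n ?_ hn
  cases n with
  | zero => exact h0
  | succ k =>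
    have := hm k (by omega)
    push Not at this
    have ya : |y (k+1)| = |x k| := by
      by_cases ho : Odd (a (k+1))
      · rw [O.yo k ho]
      · rw [O.ye k ho, abs_neg]
    rw [ya]; exact this

theorem exists_orb (S : Sys a e t u f g) (N : ℕ) : ∀ X Y : ℤ, Odd X → Odd Y →
    ∃ x y : ℕ → ℤ, Orb a e x y ∧ x N = X ∧ y N = Y := by
  classical
  choose s hs hes using S.isgn
  have so : ∀ n, Odd (s n) := fun n => by rcases hs n with h | h <;> rw [h] <;> decide
  induction N with
  | zero =>
    intro X Y hX hY
    let z : ℕ → ℤ × ℤ := fun n => Nat.rec (X, Y) (fun n p =>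
      if Odd (a (n+1)) then (-(a (n+1) * p.1 - s (n+1) * p.2) - 1, p.1)
      else (a (n+1) * p.1 - s (n+1) * p.2, -p.1)) n
    have z1 : ∀ n, z (n+1) =
      if Odd (a (n+1)) then (-(a (n+1) * (z n).1 - s (n+1) * (z n).2) - 1, (z n).1)
      else (a (n+1) * (z n).1 - s (n+1) * (z n).2, -(z n).1) := fun n => rfl
    have zo : ∀ n, Odd (z n).1 ∧ Odd (z n).2 := by
      intro n
      induction n with
      | zero => exact ⟨hX, hY⟩
      | succ n ih =>
        rw [z1]
        have h1 := ih.1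
        have h2 := (so (n+1)).mul ih.2
        split_ifs with h
        · refine ⟨?_, ih.1⟩
          have h3 := h.mul ih.1
          exact ((h3.sub_odd h2).neg).sub_odd odd_one
        · refine ⟨?_, ih.1.neg⟩
          rw [Int.not_odd_iff_even] at h
          exact (h.mul_right _).sub_odd h2
    refine ⟨fun n => (z n).1, fun n => (z n).2, ⟨fun n => (zo n).1, fun n => (zo n).2,
      ?_, ?_, ?_, ?_⟩, rfl, rfl⟩
    · intro n h; simp only [z1, if_pos h, hes]; push_cast; ring
    · intro n h; simp only [z1, if_pos h]
    · intro n h; simp only [z1, if_neg h, hes]; push_cast; ring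
    · intro n h; simp only [z1, if_neg h]
  | succ N ih =>
    intro X Y hX hY
    have ss : s (N+1) * s (N+1) = 1 := by rcases hs (N+1) with h | h <;> rw [h] <;> norm_num
    have ssR : (s (N+1) : ℝ) * s (N+1) = 1 := by exact_mod_cast ss
    by_cases h : Odd (a (N+1))
    · obtain ⟨x, y, O, hx, hy⟩ := ih Y (s (N+1) * (a (N+1) * Y + X + 1)) hY
        ((so _).mul (((h.mul hY).add_odd hX).add_odd odd_one))
      refine ⟨x, y, O, ?_, by rw [O.yo N h, hx]⟩
      have := O.xo N h
      rw [hx, hy, hes] at this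
      have h2 : (x (N+1) : ℝ) = X := by
        rw [this]; push_cast; linear_combination ((a (N+1) : ℝ) * Y + X + 1) * ssR
      exact_mod_cast h2
    · have h' := Int.not_odd_iff_even.1 h
      obtain ⟨x, y, O, hx, hy⟩ := ih (-Y) (s (N+1) * (a (N+1) * (-Y) - X)) hY.neg
        ((so _).mul ((h'.mul_right _).sub_odd hX))
      refine ⟨x, y, O, ?_, by rw [O.ye N h, hx, neg_neg]⟩
      have := O.xe N h
      rw [hx, hy, hes] at this
      have h2 : (x (N+1) : ℝ) = X := by
        rw [this]; push_cast; linear_combination ((a (N+1) : ℝ) * Y + X) * ssR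
      exact_mod_cast h2

/-- arbitrarily large solutions with bounded product -/
theorem upper (S : Sys a e t u f g) (N : ℕ) : ∃ X Y : ℤ, Odd X ∧ Odd Y ∧
    (8/5:ℝ)^N ≤ |(Y:ℝ)| ∧ |(Y:ℝ)| * |X - t 0 * Y + g 0| ≤ 50 := by
  obtain ⟨x, y, O, hx, hy⟩ := S.exists_orb N 1 3 (by decide) (by decide)
  refine ⟨x 0, y 0, O.ox 0, O.oy 0, ?_, ?_⟩
  · have key : ∀ n, (8/5:ℝ)^n * |y n + x n * u n + f n| ≤ |(y 0 : ℝ)| := by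
      intro n
      induction n with
      | zero => rw [S.u00, S.f00]; simp
      | succ n ih =>
        rw [S.orb_A O n]
        have h1 := S.u58 (n+1)
        have h2 : u (n+1) * |y n + x n * u n + f n| ≤ 5/8 * |y n + x n * u n + f n| :=
          mul_le_mul_of_nonneg_right h1 (abs_nonneg _)
        have h3 := mul_le_mul_of_nonneg_left h2 (by positivity : (0:ℝ) ≤ (8/5)^n)
        rw [pow_succ]; linarith
    have h := key N
    rw [hx, hy] at h
    have h1 : (1:ℝ) ≤ |((3:ℤ):ℝ) + ((1:ℤ):ℝ) * u N + f N| := by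
      refine le_trans ?_ (le_abs_self _)
      have := S.finv N
      have := S.u0 N
      push_cast; linarith
    have := mul_le_mul_of_nonneg_left h1 (by positivity : (0:ℝ) ≤ (8/5)^N)
    linarith
  · by_contra hh
    push Not at hh
    -- invariance upward
    have key : ∀ n, 50 * (1 + e (n+1) * t n * u n) <
        |y n + x n * u n + f n| * |x n - e (n+1) * t n * y n + g n| := by
      intro n
      induction n with
      | zero => rw [S.u00, S.f00]; simpa [S.he1] using hh
      | succ n ih =>
        rw [S.orb_A O n]
        rw [S.orb_B O n] at ih
        have up := S.upos n
        have t0 := S.t0 n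
        have hu := S.hu n
        have ht := S.ht n
        have k1 : t n * (1 + e (n+2) * t (n+1) * u (n+1)) = u (n+1) * (1 + e (n+1) * t n * u n) := by
          linear_combination u (n+1) * ht - t n * hu
        have k2 := mul_lt_mul_of_pos_left ih up
        refine lt_of_mul_lt_mul_left (a := t n) ?_ t0.le
        nlinarith
    have h := key N
    rw [hx, hy] at h
    have u0 := S.u0 N
    have u1 := S.u1 N
    have t0 := S.t0 N
    have t1 := S.t1 N
    have u58 := S.u58 N
    have t23 := S.t23 N
    have g0 := S.g0 N
    have gt := S.gt N
    have tu : t N * u N ≤ 2/3 * (5/8) := mul_le_mul t23.le u58 u0 (by norm_num)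
    have tu0 := mul_nonneg t0.le u0
    have fi := S.finv N
    have a1 : |((3:ℤ):ℝ) + ((1:ℤ):ℝ) * u N + f N| ≤ 5 := by
      rw [abs_le]; push_cast; constructor <;> linarith
    have b1 : |((1:ℤ):ℝ) - e (N+1) * t N * ((3:ℤ):ℝ) + g N| ≤ 5 := by
      rw [abs_le]; push_cast
      rcases S.he (N+1) with h | h <;> rw [h] <;> constructor <;> linarith
    have := mul_le_mul a1 b1 (abs_nonneg _) (by norm_num)
    rcases S.he (N+1) with h' | h' <;> rw [h'] at h this <;> linarith

end Sys

theorem cst_mk : Cst (Real.sqrt 10) ((Real.sqrt 13 - 3) / 2)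
    (4 * ((Real.sqrt 10 - 3) * (7 - Real.sqrt 13) /
        (31 - 2 * Real.sqrt 10 - 3 * Real.sqrt 13))) := by
  have r2 : Real.sqrt 10 ^ 2 = 10 := Real.sq_sqrt (by norm_num)
  have s2 : Real.sqrt 13 ^ 2 = 13 := Real.sq_sqrt (by norm_num)
  have r0 : 3.16227 < Real.sqrt 10 := Real.lt_sqrt_of_sq_lt (by norm_num)
  have r1 : Real.sqrt 10 < 3.16228 := (Real.sqrt_lt' (by norm_num)).2 (by norm_num)
  have s0 : 3.60555 < Real.sqrt 13 := Real.lt_sqrt_of_sq_lt (by norm_num)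
  have s1 : Real.sqrt 13 < 3.60556 := (Real.sqrt_lt' (by norm_num)).2 (by norm_num)
  generalize Real.sqrt 10 = r at *
  generalize Real.sqrt 13 = s at *
  have hd : 0 < 31 - 2 * r - 3 * s := by linarith
  refine ⟨r2, by linarith, by linarith, by nlinarith, by linarith, by linarith, ?_, ?_, ?_⟩
  · have : 0 < (r - 3) * (7 - s) := mul_pos (by linarith) (by linarith)
    positivity
  · rw [mul_div_assoc', div_le_iff₀ hd]
    have : (r - 3) * (7 - s) ≤ 0.16228 * 3.39445 :=
      mul_le_mul (by linarith) (by linarith) (by linarith) (by norm_num)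
    linarith
  · rw [mul_div_assoc', div_mul_eq_mul_div, div_eq_iff hd.ne']
    have e1 : r ^ 2 * s = 10 * s := by rw [r2]
    have e2 : s ^ 2 * r = 13 * r := by rw [s2]
    have e3 : r ^ 2 * s ^ 2 = 130 := by rw [r2, s2]; norm_num
    linear_combination (700/3 - 184/3*s + 4*s^2) * r2

namespace ANIE
variable {α : ℝ}

theorem qs_mono (E : ANIE α) (n : ℕ) : 0 < qs E.a E.e n ∧ qs E.a E.e n < qs E.a E.e (n+1) := by
  induction n with
  | zero =>
    have := E.ha 1 le_rfl
    simp only [qs]; omega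
  | succ n ih =>
    have h2 := E.ha (n+2) (by omega)
    have : qs E.a E.e (n+2) = E.a (n+2) * qs E.a E.e (n+1) + E.e (n+2) * qs E.a E.e n := by
      simp only [qs]
    refine ⟨by omega, ?_⟩
    show _ < qs E.a E.e (n+2)
    rw [this]
    rcases E.he (n+2) with h | h <;> rw [h] <;> nlinarith

theorem ab_zero (E : ANIE α) : ab E.a E.e 0 = 0 := by simp [ab]
theorem ab_succ (E : ANIE α) (n : ℕ) :
    ab E.a E.e (n+1) = (qs E.a E.e n : ℝ) / (qs E.a E.e (n+1) : ℝ) := by simp [ab]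

theorem ab_pos (E : ANIE α) (n : ℕ) : 0 < ab E.a E.e (n+1) := by
  rw [ab_succ]
  have h1 : (0:ℝ) < qs E.a E.e n := by exact_mod_cast (E.qs_mono n).1
  have h2 : (0:ℝ) < qs E.a E.e (n+1) := by exact_mod_cast (E.qs_mono (n+1)).1
  positivity

theorem ab_nonneg (E : ANIE α) (n : ℕ) : 0 ≤ ab E.a E.e n := by
  cases n with
  | zero => rw [ab_zero]
  | succ n => exact (E.ab_pos n).le

theorem ab_lt (E : ANIE α) (n : ℕ) : ab E.a E.e n < 1 := by
  cases n with
  | zero => rw [ab_zero]; norm_num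
  | succ n =>
    rw [ab_succ]
    have h2 : (0:ℝ) < qs E.a E.e (n+1) := by exact_mod_cast (E.qs_mono (n+1)).1
    rw [div_lt_one h2]
    exact_mod_cast (E.qs_mono n).2

theorem ab_rec (E : ANIE α) (n : ℕ) :
    ab E.a E.e (n+1) * ((E.a (n+1) : ℝ) + (E.e (n+1) : ℝ) * ab E.a E.e n) = 1 := by
  have h2 : (0:ℝ) < qs E.a E.e (n+1) := by exact_mod_cast (E.qs_mono (n+1)).1
  cases n with
  | zero =>
    rw [ab_zero, ab_succ]
    simp only [zero_add] at h2 ⊢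
    simp only [qs] at h2 ⊢
    field_simp
    push_cast; ring
  | succ n =>
    have h1 : (0:ℝ) < qs E.a E.e (n+1) := by exact_mod_cast (E.qs_mono (n+1)).1
    rw [ab_succ, ab_succ]
    have : (qs E.a E.e (n+2) : ℝ) =
        E.a (n+2) * qs E.a E.e (n+1) + E.e (n+2) * qs E.a E.e n := by
      simp only [qs]; push_cast; ring
    have h3 : E.a (n+1+1) + E.e (n+1+1) * ((qs E.a E.e n : ℝ) / qs E.a E.e (n+1))
      = (qs E.a E.e (n+2) : ℝ) / qs E.a E.e (n+1) := by
      rw [this]; field_simp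
    rw [h3]
    show (qs E.a E.e (n+1) : ℝ) / qs E.a E.e (n+2) * _ = 1
    field_simp

theorem t_rec (E : ANIE α) (i : ℕ) :
    E.t i * ((E.a (i+1) : ℝ) + (E.e (i+2) : ℝ) * E.t (i+1)) = 1 := by
  have h := E.hrec i
  have h0 := E.htpos i
  by_cases hz : (E.a (i+1) : ℝ) + (E.e (i+2) : ℝ) * E.t (i+1) = 0
  · rw [hz] at h; simp at h; linarith
  · rw [h]; field_simp

theorem c2 (E : ANIE α) (i : ℕ) (h2 : E.a (i+1) = 2) (he : E.e (i+1) = -1) :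
    ab E.a E.e i * (1 + E.t (i+1)) ≤ E.t (i+1) := by
  cases i with
  | zero => rw [ab_zero]; simpa using (E.htpos _).le
  | succ i =>
    have h := E.hcond2 (i+2) (by omega) h2 he
    simp only [show i + 2 - 1 = i + 1 by omega] at h
    have p := E.ab_pos i
    have q := E.htpos (i+2)
    show _ * (1 + E.t (i+2)) ≤ E.t (i+2)
    have : 1 / ab E.a E.e (i+1) ≥ (1 + E.t (i+2)) / E.t (i+2) := by
      rw [add_div, div_self q.ne']; linarith
    rw [ge_iff_le, div_le_div_iff₀ q p] at this
    linarith

theorem c3 (E : ANIE α) (h12 : α < 1/2) (i : ℕ) (h2 : E.a (i+1) = 2) (he : E.e (i+2) = -1) :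
    E.t (i+1) * (1 + ab E.a E.e i) < ab E.a E.e i := by
  cases i with
  | zero =>
    exfalso
    have h := E.t_rec 0
    rw [E.ht0, h2, he] at h
    have := E.htpos 1
    have := E.htpos 0
    rw [E.ht0] at this
    push_cast at h
    nlinarith
  | succ i =>
    have h := E.hcond3 (i+2) (by omega) h2 he
    simp only [show i + 2 - 1 = i + 1 by omega] at h
    have p := E.ab_pos i
    have q := E.htpos (i+2)
    show E.t (i+2) * _ < _
    have : 1 / E.t (i+2) > (1 + ab E.a E.e (i+1)) / ab E.a E.e (i+1) := by
      rw [add_div, div_self p.ne']; linarith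
    rw [gt_iff_lt, div_lt_div_iff₀ p q] at this
    linarith

theorem tle (E : ANIE α) (h12 : α < 1/2) (i : ℕ) : E.t i < 2 / 3 := by
  have h := E.t_rec i
  have h0 := E.htpos i
  have h1 := E.htpos (i+1)
  have h1' := E.htlt1 (i+1)
  have hu0 := E.ab_nonneg i
  have hu1 := E.ab_lt i
  rcases (E.ha (i+1) (by omega)).eq_or_lt with h2 | h2
  · have h2' : (E.a (i+1) : ℝ) = 2 := by exact_mod_cast h2.symm
    rcases E.he (i+2) with he | he
    · rw [h2', he] at h
      push_cast at h
      nlinarith [mul_pos h0 h1]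
    · have h3 := E.c3 h12 i h2.symm he
      rw [h2', he] at h
      push_cast at h
      have : E.t (i+1) < 1/2 := by nlinarith
      nlinarith
  · have h3 : (3:ℝ) ≤ E.a (i+1) := by exact_mod_cast h2
    rcases E.he (i+2) with he | he <;> rw [he] at h <;> push_cast at h <;>
      nlinarith [mul_pos h0 h1]

theorem D_zero (E : ANIE α) : E.D 0 = 1 := by simp [D]
theorem D_succ (E : ANIE α) (n : ℕ) : E.D (n+1) = E.D n * E.t n := by
  simp [D, Finset.prod_range_succ]
theorem D_pos (E : ANIE α) (n : ℕ) : 0 < E.D n := Finset.prod_pos fun i _ => E.htpos i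

theorem D_add (E : ANIE α) (h12 : α < 1/2) (n k : ℕ) : E.D (n+k) ≤ E.D n * (2/3)^k := by
  induction k with
  | zero => simp
  | succ k ih =>
    rw [← add_assoc, D_succ, pow_succ, ← mul_assoc]
    exact mul_le_mul ih (E.tle h12 _).le (E.htpos _).le
      (mul_nonneg (E.D_pos n).le (by positivity))

theorem D_rec (E : ANIE α) (k : ℕ) :
    (E.a (k+1) : ℝ) * E.D (k+1) = E.D k - E.e (k+2) * E.D (k+2) := by
  have h := E.t_rec k
  rw [E.D_succ (k+1), E.D_succ k]
  linear_combination E.D k * h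

theorem lam_abs (E : ANIE α) (n : ℕ) : |(E.lam n : ℝ)| ≤ 1 := by
  unfold lam
  split_ifs
  · push_cast; rw [abs_pow]; simp
  · simp

theorem summable_geo : Summable (fun k : ℕ => (2/3 : ℝ)^k) :=
  summable_geometric_of_lt_one (by norm_num) (by norm_num)

theorem summable_bd (E : ANIE α) (h12 : α < 1/2) (c : ℕ → ℝ) (hc : ∀ k, |c k| ≤ 1) (n : ℕ) :
    Summable (fun k => c k * E.D (n + k)) := by
  refine Summable.of_norm_bounded (summable_geo.mul_left (E.D n)) fun k => ?_
  rw [Real.norm_eq_abs, abs_mul, abs_of_pos (E.D_pos _)]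
  have := E.D_add h12 n k
  have := E.D_pos (n+k)
  nlinarith [hc k]

theorem dplus_rec (E : ANIE α) (h12 : α < 1/2) (n : ℕ) :
    E.dplus n = E.t n * (E.lam (n+1) + E.dplus (n+1)) := by
  have hs := E.summable_bd h12 (fun k => (E.lam (n+1+k) : ℝ)) (fun k => E.lam_abs _) (n+1)
  have h0 := E.D_pos n
  have h1 := E.htpos n
  unfold dplus
  rw [hs.tsum_eq_zero_add, E.D_succ n]
  simp only [add_zero]
  have : ∀ k, n + 1 + (k + 1) = n + 1 + 1 + k := fun k => by omega
  have e : (fun k => (E.lam (n + 1 + (k + 1)) : ℝ) * E.D (n + 1 + (k + 1)))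
      = fun k => (E.lam (n + 1 + 1 + k) : ℝ) * E.D (n + 1 + 1 + k) := by
    funext k; rw [this]
  rw [e]
  field_simp

theorem dplus_abs (E : ANIE α) (h12 : α < 1/2) (n : ℕ) : |E.dplus n| ≤ 3 := by
  have h0 := E.D_pos n
  have hn := E.D_pos (n+1)
  unfold dplus
  rw [abs_div, abs_of_pos h0, div_le_iff₀ h0]
  have hg : HasSum (fun k : ℕ => E.D (n+1) * (2/3 : ℝ)^k) (E.D (n+1) * (1 - 2/3)⁻¹) :=
    (hasSum_geometric_of_lt_one (by norm_num) (by norm_num)).mul_left _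
  have := tsum_of_norm_bounded hg (f := fun k => (E.lam (n+1+k) : ℝ) * E.D (n+1+k)) (fun k => by
    rw [Real.norm_eq_abs, abs_mul, abs_of_pos (E.D_pos _)]
    have := E.D_add h12 (n+1) k
    have := E.D_pos (n+1+k)
    nlinarith [E.lam_abs (n+1+k)])
  rw [Real.norm_eq_abs] at this
  have h3 : E.D (n+1) ≤ E.D n := by
    rw [D_succ]; nlinarith [E.htlt1 n]
  norm_num at this
  linarith

/-- the sign attached to index `n` -/
noncomputable def sg (E : ANIE α) (n : ℕ) : ℝ := (-1) ^ E.oddIdx n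

theorem oddIdx_odd (E : ANIE α) (n : ℕ) (h : Odd (E.a (n+1))) :
    E.oddIdx (n+1) = E.oddIdx n + 1 := by
  unfold oddIdx
  rw [← Finset.insert_Icc_right_eq_Icc_add_one (by omega), Finset.filter_insert, if_pos h,
    Finset.card_insert_of_notMem (by simp)]

theorem oddIdx_even (E : ANIE α) (n : ℕ) (h : ¬ Odd (E.a (n+1))) :
    E.oddIdx (n+1) = E.oddIdx n := by
  unfold oddIdx
  rw [← Finset.insert_Icc_right_eq_Icc_add_one (by omega), Finset.filter_insert, if_neg h]

theorem sg_sq (E : ANIE α) (n : ℕ) : E.sg n * E.sg n = 1 := by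
  unfold sg; rw [← mul_pow]; simp

/-- the normalised future sum -/
noncomputable def gg (E : ANIE α) (n : ℕ) : ℝ := - (E.sg n * E.dplus n)

theorem gg_odd (E : ANIE α) (h12 : α < 1/2) (n : ℕ) (h : Odd (E.a (n+1))) :
    E.gg n = E.t n * (1 - E.gg (n+1)) := by
  have h1 : E.sg (n+1) = - E.sg n := by unfold sg; rw [E.oddIdx_odd n h, pow_succ]; ring
  have h2 : (E.lam (n+1) : ℝ) = E.sg (n+1) := by
    unfold lam sg; rw [if_pos h]; push_cast; rfl
  unfold gg
  rw [E.dplus_rec h12 n, h2, h1]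
  linear_combination E.t n * E.sg_sq n

theorem gg_even (E : ANIE α) (h12 : α < 1/2) (n : ℕ) (h : ¬ Odd (E.a (n+1))) :
    E.gg n = E.t n * E.gg (n+1) := by
  have h1 : E.sg (n+1) = E.sg n := by unfold sg; rw [E.oddIdx_even n h]
  have h2 : (E.lam (n+1) : ℝ) = 0 := by
    unfold lam; rw [if_neg h]; simp
  unfold gg
  rw [E.dplus_rec h12 n, h2, h1]
  ring

theorem gg_bd (E : ANIE α) (h12 : α < 1/2) (k : ℕ) : ∀ n,
    -(3 * (2/3:ℝ)^k) ≤ E.gg n ∧ E.gg n ≤ 1 + 3 * (2/3:ℝ)^k := by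
  induction k with
  | zero =>
    intro n
    have h : |E.gg n| ≤ 3 := by
      unfold gg
      rw [abs_neg, abs_mul]
      have : |E.sg n| = 1 := by unfold sg; rw [abs_pow]; simp
      rw [this, one_mul]; exact E.dplus_abs h12 n
    rw [abs_le] at h
    constructor <;> simp <;> linarith
  | succ k ih =>
    intro n
    obtain ⟨h1, h2⟩ := ih (n+1)
    have hp : (0:ℝ) < (2/3)^k := by positivity
    have t0 := E.htpos n
    have t1 := E.tle h12 n
    rw [pow_succ]
    generalize (2/3:ℝ)^k = p at *
    by_cases h : Odd (E.a (n+1))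
    · rw [E.gg_odd h12 n h]
      constructor
      · nlinarith
      · nlinarith
    · rw [E.gg_even h12 n h]
      constructor
      · nlinarith
      · nlinarith

theorem gg_lim (E : ANIE α) (h12 : α < 1/2) (n : ℕ) : 0 ≤ E.gg n ∧ E.gg n ≤ 1 := by
  have h : Tendsto (fun k : ℕ => (2/3:ℝ)^k) atTop (nhds 0) :=
    tendsto_pow_atTop_nhds_zero_of_lt_one (by norm_num) (by norm_num)
  constructor
  · have := (h.const_mul 3).neg
    simp only [mul_zero, neg_zero] at this
    exact le_of_tendsto' this fun k => (E.gg_bd h12 k n).1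
  · have := (h.const_mul 3).const_add 1
    simp only [mul_zero, add_zero] at this
    exact ge_of_tendsto' this fun k => (E.gg_bd h12 k n).2

/-- the normalised past sum -/
noncomputable def ff (E : ANIE α) : ℕ → ℝ
  | 0 => 0
  | n + 1 => if Odd (E.a (n+1)) then ab E.a E.e (n+1) * (1 + E.e (n+1) * ff E n)
      else - (E.e (n+1) * ab E.a E.e (n+1) * ff E n)

theorem c45 (E : ANIE α) (i k : ℕ) (h1 : E.a (i+1) = 2) (h2 : E.e (i+1) = 1)
    (h3 : ∀ j, j < k → E.a (i+2+j) = 3 ∧ E.e (i+2+j) = -1)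
    (h4 : E.a (i+2+k) = 2) (h5 : E.e (i+2+k) = -1) : False := by
  refine E.hcond4 (i+1) k (by omega) ⟨by rw [h1, h2]; norm_num, fun j hj => ?_, ?_⟩
  · have := h3 j hj
    show E.e (i+2+j) * E.a (i+2+j) = -3
    rw [this.1, this.2]; norm_num
  · show E.e (i+2+k) * E.a (i+2+k) = -2
    rw [h4, h5]; norm_num

theorem cast_e1 {x : ℤ} (h : (x:ℝ) = 1) : x = 1 := by exact_mod_cast h
theorem cast_e2 {x : ℤ} (h : (x:ℝ) = -1) : x = -1 := by exact_mod_cast h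

theorem sys (E : ANIE α) (h12 : α < 1/2) :
    Sys E.a (fun i => (E.e i : ℝ)) E.t (fun i => ab E.a E.e i) E.ff E.gg where
  ha i := E.ha _ (by omega)
  he i := by rcases E.he i with h | h <;> simp [h]
  he1 := by simp [E.he1]
  t0 := E.htpos
  t1 := E.htlt1
  ht := E.t_rec
  u00 := E.ab_zero
  u0 := E.ab_nonneg
  u1 := E.ab_lt
  hu := E.ab_rec
  f00 := rfl
  fodd i h := by simp only [ff]; rw [if_pos h]
  feven i h := by simp only [ff]; rw [if_neg h]
  g0 i := (E.gg_lim h12 i).1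
  gt i := by
    have := E.gg_lim h12 (i+1)
    have := E.htpos i
    by_cases h : Odd (E.a (i+1))
    · rw [E.gg_odd h12 i h]; nlinarith
    · rw [E.gg_even h12 i h]; nlinarith
  godd i h := E.gg_odd h12 i h
  geven i h := E.gg_even h12 i h
  hc1 i h := by
    rcases E.hcond1 (i+1) (by omega) h with h | h
    · left; simp [h]
    · right; simp [h]
  hc2 i h h' := E.c2 i h (cast_e2 h')
  hc3 i h h' := E.c3 h12 i h (cast_e2 h')
  hc4 i h1 h2 h3 h4 := E.c45 i 0 h1 (cast_e1 h2) (by simp) h3 (cast_e2 h4)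
  hc5 i h1 h2 h3 h4 h5 h6 := E.c45 i 1 h1 (cast_e1 h2)
    (fun j hj => by
      have : j = 0 := by omega
      subst this
      exact ⟨h3, cast_e2 h4⟩) h5 (cast_e2 h6)

theorem gamma_eq (E : ANIE α) (h12 : α < 1/2) :
    2 * E.gammaStar = 1 + α - E.gg 0 := by
  have hg : E.gg 0 = - ∑' k : ℕ, (E.lam (k+1) : ℝ) * E.D (k+1) := by
    have : E.sg 0 = 1 := by unfold sg oddIdx; simp
    unfold gg dplus
    rw [this, E.D_zero]
    simp [add_comm]
  have he : ∀ i, |(E.e i : ℝ)| ≤ 1 := fun i => by rcases E.he i with h | h <;> simp [h]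
  have sl : Summable fun k : ℕ => (E.lam (k+1) : ℝ) * E.D (k+1) := by
    have := E.summable_bd h12 (fun k => (E.lam (k+1) : ℝ)) (fun k => E.lam_abs _) 1
    simpa [add_comm] using this
  have sD : Summable E.D := by
    have := E.summable_bd h12 (fun k => 1) (fun k => by simp) 0
    simpa using this
  have se : Summable fun k => (E.e k : ℝ) * E.D k := by
    have := E.summable_bd h12 (fun k => (E.e k : ℝ)) he 0
    simpa using this
  have hterm : ∀ k, ((E.a (k+1) : ℝ) - 1 + E.e (k+1)) * E.D (k+1)
      = (E.D k - E.D (k+1)) + ((E.e (k+1) : ℝ) * E.D (k+1) - E.e (k+2) * E.D (k+2)) := by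
    intro k
    linear_combination E.D_rec k
  have s1 : Summable fun k => ((E.a (k+1) : ℝ) - 1 + E.e (k+1)) * E.D (k+1) := by
    simp only [hterm]
    have sD1 := (summable_nat_add_iff 1).2 sD
    have se1 := (summable_nat_add_iff 1).2 se
    have se2 := (summable_nat_add_iff 2).2 se
    exact (sD.sub sD1).add (se1.sub se2)
  have hpart : ∀ n, ∑ k ∈ Finset.range n, ((E.a (k+1) : ℝ) - 1 + E.e (k+1)) * E.D (k+1)
      = 1 + α - E.D n - E.e (n+1) * E.D (n+1) := by
    intro n
    induction n with
    | zero => simp [E.D_zero, E.D_succ, E.he1, E.ht0]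
    | succ n ih => rw [Finset.sum_range_succ, ih, hterm]; ring
  have hs : HasSum (fun k => ((E.a (k+1) : ℝ) - 1 + E.e (k+1)) * E.D (k+1)) (1 + α) := by
    rw [s1.hasSum_iff_tendsto_nat]
    simp only [hpart]
    have l1 := sD.tendsto_atTop_zero
    have l2 := ((summable_nat_add_iff 1).2 se).tendsto_atTop_zero
    have := (l1.const_sub (1+α)).sub l2
    simpa using this
  have := (hs.add sl.hasSum).mul_left (1/2)
  have h2 : E.gammaStar = 1/2 * (1 + α + ∑' k : ℕ, (E.lam (k+1) : ℝ) * E.D (k+1)) := by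
    unfold gammaStar
    rw [← this.tsum_eq]
    congr 1; funext k; ring
  rw [h2, hg]; ring

theorem key (E : ANIE α) (h12 : α < 1/2) (m l : ℤ) :
    ((-1 - 2*l : ℤ) : ℝ) - E.t 0 * ((1 - 2*m : ℤ) : ℝ) + E.gg 0
      = 2 * (m * α - E.gammaStar - l) := by
  rw [E.ht0]; push_cast; linear_combination E.gamma_eq h12

theorem low (E : ANIE α) (h0 : 0 < α) (h12 : α < 1/2) {r b K : ℝ} (C : Cst r b K) (m : ℤ)
    (hm : 2 * |E.gammaStar| + 3 < |(m:ℝ)|) :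
    K ≤ (2 * |(m:ℝ)| + 1) * (2 * nint (m * α - E.gammaStar)) := by
  set l := round (m * α - E.gammaStar) with hl
  have S := E.sys h12
  obtain ⟨x, y, O, hx, hy⟩ := S.exists_orb 0 (-1 - 2*l) (1 - 2*m) ⟨-1-l, by ring⟩ ⟨-m, by ring⟩
  have hr : |m * α - E.gammaStar - l| ≤ 1/2 := abs_sub_round _
  have hlt : |x 0| < |y 0| := by
    rw [hx, hy]
    have h1 : ((|-1 - 2*l| : ℤ) : ℝ) < ((|1 - 2*m| : ℤ) : ℝ) := by
      push_cast
      have a1 : 2 * |(m:ℝ)| - 1 ≤ |1 - 2 * (m:ℝ)| := by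
        have := abs_sub_abs_le_abs_sub (2 * (m:ℝ)) 1
        rw [abs_mul, abs_two, abs_one, abs_sub_comm] at this
        exact this
      have a2 : |-1 - 2 * (l:ℝ)| ≤ |(m:ℝ)| + 2 * |E.gammaStar| + 2 := by
        have e : -1 - 2 * (l:ℝ) = 2 * (m * α - E.gammaStar - l) + (2 * E.gammaStar
          - 1 - 2 * (m * α)) := by ring
        have b1 := abs_le.1 hr
        have b2 := neg_abs_le E.gammaStar
        have b3 := le_abs_self E.gammaStar
        have b4 : |2 * ((m:ℝ) * α)| ≤ |(m:ℝ)| := by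
          rw [abs_mul, abs_mul, abs_two, abs_of_pos h0]
          nlinarith [abs_nonneg (m:ℝ)]
        have b5 := abs_le.1 b4
        rw [e, abs_le]; constructor <;> linarith
      linarith
    exact_mod_cast h1
  have := S.lower C O hlt
  rw [hx, hy, E.key h12, abs_mul, abs_two] at this
  have a1 : |((1 - 2*m : ℤ) : ℝ)| ≤ 2 * |(m:ℝ)| + 1 := by
    push_cast
    have := abs_sub (1:ℝ) (2 * (m:ℝ))
    rw [abs_mul, abs_two, abs_one] at this
    linarith
  have e : nint (m * α - E.gammaStar) = |m * α - E.gammaStar - l| := rfl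
  rw [e]
  exact this.trans (mul_le_mul_of_nonneg_right a1 (by positivity))

theorem fin_abs (B : ℝ) : {m : ℤ | |(m:ℝ)| ≤ B}.Finite := by
  refine (Set.finite_Icc (-⌈B⌉) ⌈B⌉).subset fun m hm => ?_
  have hm' : |(m:ℝ)| ≤ B := hm
  have := abs_le.1 (hm'.trans (Int.le_ceil B))
  exact ⟨by exact_mod_cast this.1, by exact_mod_cast this.2⟩

theorem cob (E : ANIE α) (h12 : α < 1/2) :
    IsCoboundedUnder (· ≥ ·) cofinite
      (fun n : ℤ => (|n| : ℝ) * nint (n * α - E.gammaStar)) := by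
  refine IsCoboundedUnder.of_frequently_le (a := 25) ?_
  rw [frequently_cofinite_iff_infinite]
  intro hfin
  obtain ⟨B, hB⟩ := (hfin.image (fun m : ℤ => |(m:ℝ)|)).bddAbove
  have hB' : ∀ m : ℤ, (|m| : ℝ) * nint (m * α - E.gammaStar) ≤ 25 → |(m:ℝ)| ≤ B :=
    fun m hm => hB ⟨m, hm, rfl⟩
  obtain ⟨N, hN⟩ := pow_unbounded_of_one_lt (2 * B + 1) (show (1:ℝ) < 8/5 by norm_num)
  obtain ⟨X, Y, hX, hY, h1, h2⟩ := (E.sys h12).upper N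
  obtain ⟨p, hp⟩ := hX
  obtain ⟨q, hq⟩ := hY
  have eX : X = -1 - 2 * (-1 - p) := by rw [hp]; ring
  have eY : Y = 1 - 2 * (-q) := by rw [hq]; ring
  rw [eX, eY, E.key h12, abs_mul, abs_two] at h2
  rw [eY] at h1
  generalize -q = m at *
  generalize -1 - p = l at *
  have a1 : |((1 - 2*m : ℤ) : ℝ)| ≤ 2 * |(m:ℝ)| + 1 := by
    push_cast
    have := abs_sub (1:ℝ) (2 * (m:ℝ))
    rw [abs_mul, abs_two, abs_one] at this
    linarith
  have a2 : |(m:ℝ)| ≤ |((1 - 2*m : ℤ) : ℝ)| := by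
    have : |m| ≤ |1 - 2*m| := by
      rcases abs_cases m with h | h <;> rcases abs_cases (1 - 2*m) with h' | h' <;> omega
    exact_mod_cast this
  have a3 : nint (m * α - E.gammaStar) ≤ |m * α - E.gammaStar - l| := round_le _ _
  have := hB' m (by
    have a4 : (0:ℝ) ≤ nint (m * α - E.gammaStar) := abs_nonneg _
    have := mul_le_mul a2 a3 a4 (abs_nonneg _)
    push_cast at *
    linarith)
  linarith

end ANIE

theorem stmt3 (α : ℝ) (hirr : Irrational α) (h0 : 0 < α) (h12 : α < 1 / 2)
    (E : ANIE α) :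
    Mval α E.gammaStar ≥
      (Real.sqrt 10 - 3) * (7 - Real.sqrt 13) /
        (31 - 2 * Real.sqrt 10 - 3 * Real.sqrt 13) := by
  have C := cst_mk
  set c := (Real.sqrt 10 - 3) * (7 - Real.sqrt 13) /
        (31 - 2 * Real.sqrt 10 - 3 * Real.sqrt 13) with hc
  refine le_of_forall_lt fun c' hc' => ?_
  obtain ⟨d, hd1, hd2⟩ := exists_between hc'
  refine hd1.trans_le ?_
  refine le_liminf_of_le (E.cob h12) ?_
  have hf := (ANIE.fin_abs (max (2 * |E.gammaStar| + 3) (|d| / (2 * (c - d))))).compl_mem_cofinite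
  filter_upwards [hf] with m hm
  have hm' : max (2 * |E.gammaStar| + 3) (|d| / (2 * (c - d))) < |(m:ℝ)| := not_le.1 hm
  obtain ⟨m1, m2⟩ := max_lt_iff.1 hm'
  have hl := E.low h0 h12 C m m1
  rw [div_lt_iff₀ (by linarith)] at m2
  have hmp := abs_nonneg (m:ℝ)
  have hn : (0:ℝ) ≤ nint (m * α - E.gammaStar) := abs_nonneg _
  have hd := le_abs_self d
  have q : (0:ℝ) < 2 * |(m:ℝ)| + 1 := by linarith
  have : d * (2 * |(m:ℝ)| + 1) ≤ (|(m:ℝ)| * nint (m * α - E.gammaStar)) * (2 * |(m:ℝ)| + 1) := by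
    nlinarith
  exact le_of_mul_le_mul_right this q
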